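/- Let s ∈ (0,1) and u, v ∈ C_c^∞(ℝⁿ), and let U, V be their Caffarelli–Silvestre extensions. Then for every x ∈ ℝⁿ, Γ₁(u,v)(x) = β_s ∫₀^∞ ( P_z^{(s)} ∗ ( ∇_x U(·,z)·∇_x V(·,z) + ∂_z U(·,z) ∂_z V(·,z) ) )(x) z^{1−2s} dz. -/

import Mathlib

open MeasureTheory Filter Set
open scoped Topology ENNReal NNReal

noncomputable section

/-- `ℝⁿ` with the Euclidean norm. -/
abbrev En (n : ℕ) := EuclideanSpace ℝ (Fin n)

/-- The normalizing constant `p(n,s) = Γ(n/2+s)/(π^{n/2} Γ(s))` of the Poisson kernel. -/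
def pns (n : ℕ) (s : ℝ) : ℝ :=
  Real.Gamma ((n : ℝ) / 2 + s) / (Real.pi ^ ((n : ℝ) / 2) * Real.Gamma s)

/-- The fractional Poisson kernel `P_z^{(s)}(x) = p(n,s) z^{2s} (|x|² + z²)^{-(n+2s)/2}`. -/
def Pker (n : ℕ) (s z : ℝ) (x : En n) : ℝ :=
  pns n s * z ^ (2 * s) * (‖x‖ ^ 2 + z ^ 2) ^ (-((n : ℝ) + 2 * s) / 2)

/-- Convolution with the fractional Poisson kernel in the first variable, at fixed `z`. -/
def Pconv (n : ℕ) (s z : ℝ) (f : En n → ℝ) (x : En n) : ℝ :=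
  ∫ y, Pker n s z (x - y) * f y

/-- The Caffarelli–Silvestre extension `U(x,z) = (P_z^{(s)} ∗ u)(x)`. -/
def CSext (n : ℕ) (s : ℝ) (u : En n → ℝ) (x : En n) (z : ℝ) : ℝ :=
  Pconv n s z u x

/-- The constant `C(n,s) = 4^s Γ(n/2+s) / (π^{n/2} |Γ(-s)|)`. -/
def Cns (n : ℕ) (s : ℝ) : ℝ :=
  4 ^ s * Real.Gamma ((n : ℝ) / 2 + s) / (Real.pi ^ ((n : ℝ) / 2) * |Real.Gamma (-s)|)

/-- The fractional Laplacian `(-Δ)^s w(x)` as a principal-value singular integral. -/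
def fracLap (n : ℕ) (s : ℝ) (w : En n → ℝ) (x : En n) : ℝ :=
  Cns n s * limUnder (𝓝[>] (0 : ℝ))
    (fun ε : ℝ => ∫ y in {y : En n | ε < ‖x - y‖}, (w x - w y) / ‖x - y‖ ^ ((n : ℝ) + 2 * s))

/-- `Λ^s w := -(-Δ)^s w`. -/
def Lam (n : ℕ) (s : ℝ) (w : En n → ℝ) (x : En n) : ℝ := - fracLap n s w x

/-- The first-order carré du champ `Γ₁(u,v) = ½(Λ^s(uv) - u Λ^s v - v Λ^s u)`. -/
def Gamma1 (n : ℕ) (s : ℝ) (u v : En n → ℝ) (x : En n) : ℝ :=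
  (Lam n s (fun y => u y * v y) x - u x * Lam n s v x - v x * Lam n s u x) / 2

/-- The constant `β_s = 2^{2s-1} Γ(s)/Γ(1-s)`. -/
def betaS (s : ℝ) : ℝ := 2 ^ (2 * s - 1) * Real.Gamma s / Real.Gamma (1 - s)

/-- Partial derivative in the `i`-th coordinate direction. -/
def pd {n : ℕ} (i : Fin n) (f : En n → ℝ) (x : En n) : ℝ :=
  fderiv ℝ f x (EuclideanSpace.single i 1)

/-- The Laplacian in the `x`-variables. -/
def lapX {n : ℕ} (f : En n → ℝ) (x : En n) : ℝ := ∑ i, pd i (pd i f) x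

/-- The degenerate operator `L_s W = div_{x,z}(z^{1-2s} ∇̃W)`, written out as
`z^{1-2s} Δ_x W + ∂_z(z^{1-2s} ∂_z W)`. -/
def LsOp {n : ℕ} (s : ℝ) (W : En n → ℝ → ℝ) (x : En n) (z : ℝ) : ℝ :=
  z ^ (1 - 2 * s) * lapX (fun y => W y z) x
    + deriv (fun t => t ^ (1 - 2 * s) * deriv (W x) t) z

/-!
The extension and the fractional Laplacian are Fourier multipliers, so both sides of the identity
are bilinear superpositions of plane waves `e^{i⟨k, x⟩} e^{i⟨l, x⟩}`, and it suffices to compare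
their symbols. With `ψ_κ(z)` the symbol of `P_z ∗` at `|k|² = κ` and `q_κ = -z^{1-2s} ψ_κ'`, the
extension equation reads `q_κ' = -z^{1-2s} κ ψ_κ`. For `κ₁ = |k|²`, `κ₂ = |l|²`, `κ₃ = |k + l|²`
these two equations make the symbol of the right-hand integrand the exact derivative of
`(ψ₁ ψ₂ q₃ - q₁ ψ₂ ψ₃ - ψ₁ q₂ ψ₃) / 2`. This flux vanishes at infinity, and at `z = 0` it equals
`-(κ₁^s + κ₂^s - κ₃^s) / (2 β_s)`, which is `-β_s⁻¹` times the symbol of `Γ₁`.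
-/

/-! ### Integrals over the half-line -/

section HalfLine

theorem integrable_prod_of_nonneg {α β : Type*} [MeasurableSpace α] [MeasurableSpace β]
    {μ : Measure α} {ν : Measure β} [SFinite μ] [SFinite ν] {f : α × β → ℝ}
    (hf : AEStronglyMeasurable f (μ.prod ν)) (hnonneg : ∀ᵐ y ∂ν, ∀ᵐ x ∂μ, 0 ≤ f (x, y))
    (hsection : ∀ᵐ y ∂ν, Integrable (fun x => f (x, y)) μ)
    (hint : Integrable (fun y => ∫ x, f (x, y) ∂μ) ν) : Integrable f (μ.prod ν) := by
  refine (integrable_prod_iff' hf).2 ⟨hsection, hint.congr ?_⟩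
  filter_upwards [hnonneg] with y hy
  exact integral_congr_ae (hy.mono fun x hx => (Real.norm_of_nonneg hx).symm)

theorem integrable_prod_mul_ofReal_of_integral_norm_le {α β : Type*} [MeasurableSpace α]
    [MeasurableSpace β] {μ : Measure α} {ν : Measure β} [SFinite μ] [SFinite ν] {c : β → ℂ}
    {F : α → β → ℝ} {B : β → ℝ} (hc : AEStronglyMeasurable c ν)
    (hF : AEStronglyMeasurable (fun q : α × β => F q.1 q.2) (μ.prod ν))
    (hint : ∀ y, Integrable (F · y) μ) (hle : ∀ y, ∫ x, ‖F x y‖ ∂μ ≤ B y)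
    (hB : Integrable (fun y => B y * ‖c y‖) ν) :
    Integrable (fun q : α × β => c q.2 * (F q.1 q.2 : ℂ)) (μ.prod ν) := by
  have hmeas : AEStronglyMeasurable (fun q : α × β => c q.2 * (F q.1 q.2 : ℂ)) (μ.prod ν) :=
    hc.comp_snd.mul (Complex.continuous_ofReal.comp_aestronglyMeasurable hF)
  refine (integrable_prod_iff' hmeas).2
    ⟨Eventually.of_forall fun y => (hint y).ofReal.const_mul (c y),
      hB.mono' hmeas.norm.prod_swap.integral_prod_right' (Eventually.of_forall fun y => ?_)⟩
  rw [Real.norm_of_nonneg (integral_nonneg fun _ => norm_nonneg _)]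
  simp only [norm_mul, Complex.norm_real, integral_const_mul]
  rw [mul_comm]
  exact mul_le_mul_of_nonneg_right (hle y) (norm_nonneg _)

theorem integral_Ioi_comp_inv {E : Type*} [NormedAddCommGroup E] [NormedSpace ℝ E] (f : ℝ → E) :
    ∫ t in Ioi (0 : ℝ), t ^ (-2 : ℝ) • f t⁻¹ = ∫ t in Ioi (0 : ℝ), f t := by
  rw [← integral_comp_rpow_Ioi f (p := -1) (by norm_num)]
  refine setIntegral_congr_fun measurableSet_Ioi fun t _ => ?_
  norm_num [Real.rpow_neg_one]

theorem integrableOn_Ioi_comp_inv_iff {E : Type*} [NormedAddCommGroup E] [NormedSpace ℝ E]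
    (f : ℝ → E) :
    IntegrableOn (fun t : ℝ => t ^ (-2 : ℝ) • f t⁻¹) (Ioi 0) ↔ IntegrableOn f (Ioi 0) := by
  rw [← integrableOn_Ioi_comp_rpow_iff f (p := -1) (by norm_num)]
  refine integrableOn_congr_fun (fun t _ => ?_) measurableSet_Ioi
  norm_num [Real.rpow_neg_one]

variable {s r m : ℝ}

theorem integrableOn_rpow_mul_exp_neg_mul (hs : 0 < s) (hr : 0 < r) :
    IntegrableOn (fun t : ℝ => t ^ (s - 1) * Real.exp (-(r * t))) (Ioi 0) := by
  simpa using integrableOn_rpow_mul_exp_neg_mul_rpow (p := 1) (by linarith : -1 < s - 1) one_pos hr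

theorem intervalIntegral_mul_exp_neg_mul (m t : ℝ) :
    ∫ r in (0 : ℝ)..m, t * Real.exp (-(r * t)) = 1 - Real.exp (-(m * t)) := by
  have hderiv (r : ℝ) :
      HasDerivAt (fun r => -Real.exp (-(r * t))) (t * Real.exp (-(r * t))) r := by
    refine ((hasDerivAt_id r).mul_const t).neg.exp.neg.congr_deriv ?_
    simp only [id, Pi.neg_apply]; ring
  rw [intervalIntegral.integral_eq_sub_of_hasDerivAt (fun r _ => hderiv r)
    (by apply Continuous.intervalIntegrable; fun_prop), zero_mul, neg_zero, Real.exp_zero]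
  ring

theorem integral_Ioc_rpow_neg_mul_exp_neg_mul (s : ℝ) (hm : 0 ≤ m) {t : ℝ} (ht : 0 < t) :
    ∫ r in Ioc 0 m, t ^ (-s) * Real.exp (-(r * t)) =
      t ^ (-s - 1) * (1 - Real.exp (-(m * t))) := by
  rw [← intervalIntegral_mul_exp_neg_mul, intervalIntegral.integral_of_le hm,
    ← integral_const_mul, Real.rpow_sub_one ht.ne']
  congr with r
  field_simp

theorem integral_rpow_mul_one_sub_exp_neg_mul (hs0 : 0 < s) (hs1 : s < 1) (hm : 0 ≤ m) :
    IntegrableOn (fun t : ℝ => t ^ (-s - 1) * (1 - Real.exp (-(m * t)))) (Ioi 0) ∧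
      ∫ t in Ioi (0 : ℝ), t ^ (-s - 1) * (1 - Real.exp (-(m * t))) =
        Real.Gamma (1 - s) / s * m ^ s := by
  have hsection (r : ℝ) (hr : r ∈ Ioc 0 m) :
      ∫ t in Ioi (0 : ℝ), t ^ (-s) * Real.exp (-(r * t)) = Real.Gamma (1 - s) * r ^ (s - 1) := by
    have h := Real.integral_rpow_mul_exp_neg_mul_Ioi (sub_pos.2 hs1) hr.1
    rw [one_div, Real.inv_rpow hr.1.le, ← Real.rpow_neg hr.1.le, neg_sub] at h
    rw [← mul_comm (r ^ (s - 1)), ← h, show 1 - s - 1 = -s by ring]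
  have hpow : IntegrableOn (fun r : ℝ => Real.Gamma (1 - s) * r ^ (s - 1)) (Ioc 0 m) :=
    ((intervalIntegrable_iff_integrableOn_Ioc_of_le hm).1
      (intervalIntegral.intervalIntegrable_rpow' (by linarith))).const_mul _
  have hprod : Integrable (fun p : ℝ × ℝ => p.1 ^ (-s) * Real.exp (-(p.2 * p.1)))
      ((volume.restrict (Ioi 0)).prod (volume.restrict (Ioc 0 m))) := by
    refine integrable_prod_of_nonneg (by fun_prop : Measurable _).aestronglyMeasurable ?_ ?_ ?_
    · filter_upwards with r
      filter_upwards [ae_restrict_mem measurableSet_Ioi] with t ht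
      exact mul_nonneg (Real.rpow_nonneg (mem_Ioi.1 ht).le _) (Real.exp_pos _).le
    · filter_upwards [ae_restrict_mem measurableSet_Ioc] with r hr
      simpa [IntegrableOn] using integrableOn_rpow_mul_exp_neg_mul (sub_pos.2 hs1) hr.1
    · exact hpow.congr_fun (fun r hr => (hsection r hr).symm) measurableSet_Ioc
  have hinner : EqOn (fun t : ℝ => ∫ r in Ioc 0 m, t ^ (-s) * Real.exp (-(r * t)))
      (fun t => t ^ (-s - 1) * (1 - Real.exp (-(m * t)))) (Ioi 0) :=
    fun t ht => integral_Ioc_rpow_neg_mul_exp_neg_mul s hm ht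
  refine ⟨IntegrableOn.congr_fun hprod.integral_prod_left hinner measurableSet_Ioi, ?_⟩
  calc ∫ t in Ioi (0 : ℝ), t ^ (-s - 1) * (1 - Real.exp (-(m * t)))
      = ∫ t in Ioi (0 : ℝ), ∫ r in Ioc 0 m, t ^ (-s) * Real.exp (-(r * t)) :=
        (setIntegral_congr_fun measurableSet_Ioi hinner).symm
    _ = ∫ r in Ioc 0 m, Real.Gamma (1 - s) * r ^ (s - 1) := by
        rw [integral_integral_swap hprod]
        exact setIntegral_congr_fun measurableSet_Ioc hsection
    _ = Real.Gamma (1 - s) / s * m ^ s := by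
        rw [integral_const_mul, ← intervalIntegral.integral_of_le hm,
          integral_rpow (Or.inl (by linarith)), sub_add_cancel, Real.zero_rpow hs0.ne']
        ring

end HalfLine

section Bessel

variable {s m : ℝ}

/-- The integral `∫₀^∞ t^{s-1} exp(-t - m/t) dt`, which is `2 m^{s/2} K_s(2√m)` in terms of the
modified Bessel function of the second kind. -/
def besselIntegral (s m : ℝ) : ℝ := ∫ t in Ioi (0 : ℝ), t ^ (s - 1) * Real.exp (-t - m / t)

theorem measurable_besselIntegrand (s m : ℝ) :
    Measurable fun t : ℝ => t ^ (s - 1) * Real.exp (-t - m / t) := by fun_prop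

theorem norm_besselIntegrand_le (s : ℝ) (hm : 0 ≤ m) {t : ℝ} (ht : 0 < t) :
    ‖t ^ (s - 1) * Real.exp (-t - m / t)‖ ≤ t ^ (s - 1) * Real.exp (-t) := by
  rw [Real.norm_of_nonneg (by positivity)]
  gcongr
  linarith [div_nonneg hm ht.le]

theorem integrableOn_rpow_mul_exp_neg (hs : 0 < s) :
    IntegrableOn (fun t : ℝ => t ^ (s - 1) * Real.exp (-t)) (Ioi 0) := by
  simpa using integrableOn_rpow_mul_exp_neg_mul hs one_pos

theorem integrableOn_besselIntegrand (hs : 0 < s) (hm : 0 ≤ m) :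
    IntegrableOn (fun t : ℝ => t ^ (s - 1) * Real.exp (-t - m / t)) (Ioi 0) := by
  refine (integrableOn_rpow_mul_exp_neg hs).mono'
    (measurable_besselIntegrand s m).aestronglyMeasurable ?_
  filter_upwards [ae_restrict_mem measurableSet_Ioi] with t ht
  exact norm_besselIntegrand_le s hm ht

theorem besselIntegral_zero (hs : 0 < s) : besselIntegral s 0 = Real.Gamma s := by
  simp [besselIntegral, Real.Gamma_eq_integral hs, mul_comm]

theorem besselIntegral_nonneg (s m : ℝ) : 0 ≤ besselIntegral s m :=
  setIntegral_nonneg measurableSet_Ioi fun t (ht : 0 < t) => by positivity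

theorem besselIntegral_le_Gamma (hs : 0 < s) (hm : 0 ≤ m) :
    besselIntegral s m ≤ Real.Gamma s := by
  rw [← besselIntegral_zero hs]
  refine setIntegral_mono_on (integrableOn_besselIntegrand hs hm)
    (integrableOn_besselIntegrand hs le_rfl) measurableSet_Ioi fun t (ht : 0 < t) => ?_
  gcongr

theorem measurable_besselIntegral (s : ℝ) : Measurable (besselIntegral s) := by
  have h : StronglyMeasurable fun p : ℝ × ℝ => p.2 ^ (s - 1) * Real.exp (-p.2 - p.1 / p.2) :=
    Measurable.stronglyMeasurable (by fun_prop)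
  exact (h.integral_prod_right (ν := volume.restrict (Ioi 0))).measurable

theorem continuousOn_besselIntegral (hs : 0 < s) : ContinuousOn (besselIntegral s) (Ici 0) := by
  refine continuousOn_of_dominated (bound := fun t => t ^ (s - 1) * Real.exp (-t))
    (fun m _ => (measurable_besselIntegrand s m).aestronglyMeasurable) (fun m hm => ?_)
    (integrableOn_rpow_mul_exp_neg hs) ?_
  · filter_upwards [ae_restrict_mem measurableSet_Ioi] with t ht
    exact norm_besselIntegrand_le s hm ht
  · filter_upwards with t
    fun_prop

theorem tendsto_besselIntegral_atTop (hs : 0 < s) : Tendsto (besselIntegral s) atTop (𝓝 0) := by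
  suffices h : Tendsto (besselIntegral s) atTop (𝓝 (∫ _ in Ioi (0 : ℝ), 0)) by simpa using h
  refine tendsto_integral_filter_of_dominated_convergence (fun t => t ^ (s - 1) * Real.exp (-t))
    (Eventually.of_forall fun m => (measurable_besselIntegrand s m).aestronglyMeasurable) ?_
    (integrableOn_rpow_mul_exp_neg hs) ?_
  · filter_upwards [eventually_ge_atTop 0] with m hm
    filter_upwards [ae_restrict_mem measurableSet_Ioi] with t ht
    exact norm_besselIntegrand_le s hm ht
  · filter_upwards [ae_restrict_mem measurableSet_Ioi] with t (ht : 0 < t)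
    rw [← mul_zero (t ^ (s - 1))]
    refine (Real.tendsto_exp_atBot.comp ?_).const_mul _
    simpa only [sub_eq_add_neg] using! tendsto_atBot_add_const_left _ (-t)
      (tendsto_neg_atTop_atBot.comp (tendsto_id.atTop_div_const ht))

theorem rpow_sub_two_mul_exp_le (s : ℝ) (hm : 0 < m) {t : ℝ} (ht : 0 < t) :
    t ^ (s - 2) * Real.exp (-t - m / t) ≤ m⁻¹ * (t ^ (s - 1) * Real.exp (-t)) := by
  have hexp : Real.exp (-(m / t)) ≤ t / m := by
    rw [Real.exp_neg, inv_le_comm₀ (Real.exp_pos _) (by positivity), inv_div]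
    linarith [Real.add_one_le_exp (m / t)]
  calc t ^ (s - 2) * Real.exp (-t - m / t)
      = t ^ (s - 2) * Real.exp (-t) * Real.exp (-(m / t)) := by
        rw [sub_eq_add_neg (-t), Real.exp_add, mul_assoc]
    _ ≤ t ^ (s - 2) * Real.exp (-t) * (t / m) := by gcongr
    _ = m⁻¹ * (t ^ (s - 1) * Real.exp (-t)) := by
        rw [show s - 1 = s - 2 + 1 by ring, Real.rpow_add_one ht.ne']; ring

theorem hasDerivAt_besselIntegral (hs : 0 < s) (hm : 0 < m) :
    HasDerivAt (besselIntegral s) (-besselIntegral (s - 1) m) m := by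
  rw [besselIntegral, ← integral_neg]
  refine (hasDerivAt_integral_of_dominated_loc_of_deriv_le
    (F' := fun m t => -(t ^ (s - 1 - 1) * Real.exp (-t - m / t)))
    (bound := fun t => (m / 2)⁻¹ * (t ^ (s - 1) * Real.exp (-t)))
    (Ioi_mem_nhds (half_lt_self hm))
    (Eventually.of_forall fun m' => (measurable_besselIntegrand s m').aestronglyMeasurable)
    (integrableOn_besselIntegrand hs hm.le)
    (measurable_besselIntegrand (s - 1) m).neg.aestronglyMeasurable ?_
    ((integrableOn_rpow_mul_exp_neg hs).const_mul _) ?_).2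
  · filter_upwards [ae_restrict_mem measurableSet_Ioi] with t (ht : 0 < t) m' (hm' : m / 2 < m')
    rw [norm_neg, Real.norm_of_nonneg (by positivity), show s - 1 - 1 = s - 2 by ring]
    refine (rpow_sub_two_mul_exp_le s (by linarith) ht).trans ?_
    gcongr
  · filter_upwards [ae_restrict_mem measurableSet_Ioi] with t (ht : 0 < t) m' _
    have hexponent : HasDerivAt (fun m' : ℝ => -t - m' / t) (-(1 / t)) m' :=
      ((hasDerivAt_id m').div_const t).const_sub (-t)
    refine (hexponent.exp.const_mul (t ^ (s - 1))).congr_deriv ?_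
    rw [Real.rpow_sub_one ht.ne' (s - 1)]
    field_simp

theorem integral_rpow_mul_exp_neg_mul_sub_div (s b : ℝ) {a : ℝ} (ha : 0 < a) :
    ∫ t in Ioi (0 : ℝ), t ^ (s - 1) * Real.exp (-(a * t) - b / t) =
      a ^ (-s) * besselIntegral s (a * b) := by
  have h := integral_comp_mul_left_Ioi
    (fun t : ℝ => t ^ (s - 1) * Real.exp (-t - a * b / t)) 0 ha
  rw [mul_zero, smul_eq_mul] at h
  calc ∫ t in Ioi (0 : ℝ), t ^ (s - 1) * Real.exp (-(a * t) - b / t)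
      = ∫ t in Ioi (0 : ℝ), a ^ (1 - s) *
          ((a * t) ^ (s - 1) * Real.exp (-(a * t) - a * b / (a * t))) := by
        refine setIntegral_congr_fun measurableSet_Ioi fun t (ht : 0 < t) => ?_
        rw [Real.mul_rpow ha.le ht.le, mul_div_mul_left _ _ ha.ne', ← mul_assoc, ← mul_assoc,
          ← Real.rpow_add ha]
        simp
    _ = a ^ (-s) * besselIntegral s (a * b) := by
        rw [integral_const_mul, h, besselIntegral, ← mul_assoc, ← Real.rpow_neg_one a,
          ← Real.rpow_add ha]
        congr 2
        ring

theorem besselIntegral_eq_rpow_mul_neg (s : ℝ) (hm : 0 < m) :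
    besselIntegral s m = m ^ s * besselIntegral (-s) m := by
  have h := integral_rpow_mul_exp_neg_mul_sub_div (-s) 1 hm
  rw [neg_neg, mul_one] at h
  rw [← h, besselIntegral, ← integral_Ioi_comp_inv]
  refine setIntegral_congr_fun measurableSet_Ioi fun t (ht : 0 < t) => ?_
  rw [smul_eq_mul, Real.inv_rpow ht.le, ← Real.rpow_neg ht.le, ← mul_assoc, ← Real.rpow_add ht,
    div_inv_eq_mul, one_div]
  ring_nf

end Bessel

/-! ### The symbols of the extension problem -/

section Symbols

variable {s κ z : ℝ}

theorem betaS_pos (hs0 : 0 < s) (hs1 : s < 1) : 0 < betaS s := by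
  have := Real.Gamma_pos_of_pos hs0
  have := Real.Gamma_pos_of_pos (sub_pos.2 hs1)
  unfold betaS
  positivity

theorem betaS_mul_betaS_one_sub (hs0 : 0 < s) (hs1 : s < 1) : betaS s * betaS (1 - s) = 1 := by
  have := Real.Gamma_pos_of_pos hs0
  have := Real.Gamma_pos_of_pos (sub_pos.2 hs1)
  have hpow : (2 : ℝ) ^ (2 * (1 - s) - 1) = (2 ^ (2 * s - 1))⁻¹ := by
    rw [← Real.rpow_neg zero_le_two]; ring_nf
  rw [betaS, betaS, hpow, sub_sub_cancel]
  field_simp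

theorem betaS_inv_mul_rpow_nonneg (hs0 : 0 < s) (hs1 : s < 1) (hκ : 0 ≤ κ) :
    0 ≤ (betaS s)⁻¹ * κ ^ s := by
  have := betaS_pos hs0 hs1
  positivity

/-- The Fourier multiplier of `u ↦ P_z^{(s)} ∗ u` as a function of `κ = |k|²`: the plane wave
`e^{i⟪k,x⟫}` has extension `poissonSymbol s (‖k‖ ^ 2) z * e^{i⟪k,x⟫}`. -/
def poissonSymbol (s κ z : ℝ) : ℝ := besselIntegral s (κ * z ^ 2 / 4) / Real.Gamma s

theorem poissonSymbol_nonneg (hs : 0 < s) (κ z : ℝ) : 0 ≤ poissonSymbol s κ z :=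
  div_nonneg (besselIntegral_nonneg _ _) (Real.Gamma_pos_of_pos hs).le

theorem poissonSymbol_le_one (hs : 0 < s) (hκ : 0 ≤ κ) (z : ℝ) : poissonSymbol s κ z ≤ 1 :=
  (div_le_one (Real.Gamma_pos_of_pos hs)).2 (besselIntegral_le_Gamma hs (by positivity))

theorem poissonSymbol_at_zero (hs : 0 < s) (κ : ℝ) : poissonSymbol s κ 0 = 1 := by
  simp [poissonSymbol, besselIntegral_zero hs, (Real.Gamma_pos_of_pos hs).ne']

theorem poissonSymbol_zero_left (hs : 0 < s) (z : ℝ) : poissonSymbol s 0 z = 1 := by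
  simp [poissonSymbol, besselIntegral_zero hs, (Real.Gamma_pos_of_pos hs).ne']

theorem measurable_poissonSymbol (s : ℝ) : Measurable fun p : ℝ × ℝ => poissonSymbol s p.1 p.2 :=
  ((measurable_besselIntegral s).comp (by fun_prop)).div_const _

theorem continuous_poissonSymbol (hs : 0 < s) (hκ : 0 ≤ κ) : Continuous (poissonSymbol s κ) :=
  ((continuousOn_besselIntegral hs).comp_continuous (by fun_prop)
    fun _ => mem_Ici.2 (by positivity)).div_const _

theorem tendsto_poissonSymbol_atTop (hs : 0 < s) (hκ : 0 < κ) :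
    Tendsto (poissonSymbol s κ) atTop (𝓝 0) := by
  have harg : Tendsto (fun z : ℝ => κ * z ^ 2 / 4) atTop atTop :=
    ((tendsto_pow_atTop two_ne_zero).const_mul_atTop hκ).atTop_div_const (by norm_num)
  simpa using! ((tendsto_besselIntegral_atTop hs).comp harg).div_const (Real.Gamma s)

/-- The Fourier multiplier of the conormal derivative `-z^{1-2s} ∂_z U` of the extension, as a
function of `κ = |k|²`; see `hasDerivAt_poissonSymbol`. -/
def conormalSymbol (s κ z : ℝ) : ℝ := (betaS s)⁻¹ * κ ^ s * poissonSymbol (1 - s) κ z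

theorem conormalSymbol_nonneg (hs0 : 0 < s) (hs1 : s < 1) (hκ : 0 ≤ κ) (z : ℝ) :
    0 ≤ conormalSymbol s κ z :=
  mul_nonneg (betaS_inv_mul_rpow_nonneg hs0 hs1 hκ) (poissonSymbol_nonneg (sub_pos.2 hs1) κ z)

theorem conormalSymbol_le (hs0 : 0 < s) (hs1 : s < 1) (hκ : 0 ≤ κ) (z : ℝ) :
    conormalSymbol s κ z ≤ (betaS s)⁻¹ * κ ^ s :=
  mul_le_of_le_one_right (betaS_inv_mul_rpow_nonneg hs0 hs1 hκ)
    (poissonSymbol_le_one (sub_pos.2 hs1) hκ z)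

theorem conormalSymbol_at_zero (hs1 : s < 1) (κ : ℝ) :
    conormalSymbol s κ 0 = (betaS s)⁻¹ * κ ^ s := by
  rw [conormalSymbol, poissonSymbol_at_zero (sub_pos.2 hs1), mul_one]

theorem measurable_conormalSymbol (s : ℝ) :
    Measurable fun p : ℝ × ℝ => conormalSymbol s p.1 p.2 := by
  have := measurable_poissonSymbol (1 - s)
  unfold conormalSymbol
  fun_prop

theorem continuous_conormalSymbol (hs1 : s < 1) (hκ : 0 ≤ κ) :
    Continuous (conormalSymbol s κ) :=
  (continuous_poissonSymbol (sub_pos.2 hs1) hκ).const_mul _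

theorem tendsto_conormalSymbol_atTop (hs0 : 0 < s) (hs1 : s < 1) (hκ : 0 ≤ κ) :
    Tendsto (conormalSymbol s κ) atTop (𝓝 0) := by
  unfold conormalSymbol
  rcases hκ.eq_or_lt with rfl | hκ
  · simp [Real.zero_rpow hs0.ne']
  · simpa using (tendsto_poissonSymbol_atTop (sub_pos.2 hs1) hκ).const_mul ((betaS s)⁻¹ * κ ^ s)

theorem hasDerivAt_poissonSymbol (hs0 : 0 < s) (hs1 : s < 1) (hκ : 0 ≤ κ) (hz : 0 < z) :
    HasDerivAt (poissonSymbol s κ) (-(z ^ (2 * s - 1) * conormalSymbol s κ z)) z := by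
  have := Real.Gamma_pos_of_pos hs0
  have := Real.Gamma_pos_of_pos (sub_pos.2 hs1)
  rcases hκ.eq_or_lt with rfl | hκ
  · rw [funext (poissonSymbol_zero_left hs0)]
    simpa [conormalSymbol, Real.zero_rpow hs0.ne'] using hasDerivAt_const z (1 : ℝ)
  have hm : 0 < κ * z ^ 2 / 4 := by positivity
  have harg : HasDerivAt (fun z : ℝ => κ * z ^ 2 / 4) (κ * z / 2) z :=
    (((hasDerivAt_pow 2 z).const_mul κ).div_const 4).congr_deriv (by norm_num; ring)
  refine (((hasDerivAt_besselIntegral hs0 hm).comp z harg).div_const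
    (Real.Gamma s)).congr_deriv ?_
  have hpow : (κ * z ^ 2 / 4) ^ (s - 1) * (κ * z / 2) =
      (2 ^ (2 * s - 1))⁻¹ * (κ ^ s * z ^ (2 * s - 1)) := by
    rw [Real.div_rpow (by positivity) (by positivity), Real.mul_rpow hκ.le (by positivity),
      ← Real.rpow_natCast z 2, ← Real.rpow_mul hz.le, show (4 : ℝ) = 2 ^ (2 : ℝ) by norm_num,
      ← Real.rpow_mul zero_le_two, show 2 * s - 1 = 2 * (s - 1) + 1 by ring,
      Real.rpow_add_one hz.ne', Real.rpow_add_one two_ne_zero, Real.rpow_sub_one hκ.ne']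
    push_cast
    field_simp
  rw [besselIntegral_eq_rpow_mul_neg (s - 1) hm, neg_sub, conormalSymbol, poissonSymbol, betaS]
  rw [neg_mul, mul_right_comm, hpow]
  field_simp

theorem hasDerivAt_conormalSymbol (hs0 : 0 < s) (hs1 : s < 1) (hκ : 0 ≤ κ) (hz : 0 < z) :
    HasDerivAt (conormalSymbol s κ) (-(z ^ (1 - 2 * s) * (κ * poissonSymbol s κ z))) z := by
  have hpow : κ ^ s * κ ^ (1 - s) = κ := by
    rw [← Real.rpow_add' hκ (by norm_num), add_sub_cancel, Real.rpow_one]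
  refine ((hasDerivAt_poissonSymbol (sub_pos.2 hs1) (sub_lt_self 1 hs0) hκ hz).const_mul
    ((betaS s)⁻¹ * κ ^ s)).congr_deriv ?_
  rw [conormalSymbol, sub_sub_cancel, show 2 * (1 - s) - 1 = 1 - 2 * s by ring]
  calc (betaS s)⁻¹ * κ ^ s *
        -(z ^ (1 - 2 * s) * ((betaS (1 - s))⁻¹ * κ ^ (1 - s) * poissonSymbol s κ z))
      = -((betaS s * betaS (1 - s))⁻¹ *
          (z ^ (1 - 2 * s) * (κ ^ s * κ ^ (1 - s) * poissonSymbol s κ z))) := by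
        rw [mul_inv]; ring
    _ = -(z ^ (1 - 2 * s) * (κ * poissonSymbol s κ z)) := by
        rw [betaS_mul_betaS_one_sub hs0 hs1, hpow, inv_one, one_mul]

theorem integral_rpow_mul_poissonSymbol (hs0 : 0 < s) (hs1 : s < 1) (hκ : 0 ≤ κ) :
    IntegrableOn (fun z => z ^ (1 - 2 * s) * (κ * poissonSymbol s κ z)) (Ioi 0) ∧
      ∫ z in Ioi (0 : ℝ), z ^ (1 - 2 * s) * (κ * poissonSymbol s κ z) =
        (betaS s)⁻¹ * κ ^ s := by
  have hderiv (z : ℝ) (hz : z ∈ Ioi 0) := hasDerivAt_conormalSymbol hs0 hs1 hκ hz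
  have hnonpos (z : ℝ) (hz : z ∈ Ioi 0) : -(z ^ (1 - 2 * s) * (κ * poissonSymbol s κ z)) ≤ 0 :=
    neg_nonpos.2 (mul_nonneg (Real.rpow_nonneg (mem_Ioi.1 hz).le _)
      (mul_nonneg hκ (poissonSymbol_nonneg hs0 κ z)))
  have hcont := (continuous_conormalSymbol hs1 hκ).continuousWithinAt (s := Ici 0) (x := 0)
  have hlim := tendsto_conormalSymbol_atTop hs0 hs1 hκ
  have hint := integrableOn_Ioi_deriv_of_nonpos hcont hderiv hnonpos hlim
  have hval := integral_Ioi_of_hasDerivAt_of_nonpos hcont hderiv hnonpos hlim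
  rw [integral_neg, conormalSymbol_at_zero hs1] at hval
  exact ⟨by simpa using! hint.neg, by linarith⟩

theorem integral_rpow_mul_conormalSymbol_le (hs0 : 0 < s) (hs1 : s < 1) (hκ : 0 ≤ κ) :
    IntegrableOn (fun z => z ^ (2 * s - 1) * conormalSymbol s κ z) (Ioi 0) ∧
      ∫ z in Ioi (0 : ℝ), z ^ (2 * s - 1) * conormalSymbol s κ z ≤ 1 := by
  rcases hκ.eq_or_lt with rfl | hκ
  · simp [conormalSymbol, Real.zero_rpow hs0.ne']
  have hderiv (z : ℝ) (hz : z ∈ Ioi 0) := hasDerivAt_poissonSymbol hs0 hs1 hκ.le hz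
  have hnonpos (z : ℝ) (hz : z ∈ Ioi 0) : -(z ^ (2 * s - 1) * conormalSymbol s κ z) ≤ 0 :=
    neg_nonpos.2 (mul_nonneg (Real.rpow_nonneg (mem_Ioi.1 hz).le _)
      (conormalSymbol_nonneg hs0 hs1 hκ.le z))
  have hcont := (continuous_poissonSymbol hs0 hκ.le).continuousWithinAt (s := Ici 0) (x := 0)
  have hlim := tendsto_poissonSymbol_atTop hs0 hκ
  have hint := integrableOn_Ioi_deriv_of_nonpos hcont hderiv hnonpos hlim
  have hval := integral_Ioi_of_hasDerivAt_of_nonpos hcont hderiv hnonpos hlim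
  rw [integral_neg, poissonSymbol_at_zero hs0] at hval
  exact ⟨by simpa using! hint.neg, by linarith⟩

end Symbols

section Leibniz

variable {s κ₁ κ₂ κ₃ z : ℝ}

/-- The weighted bilinear symbol of `P_z ∗ (∇_x U · ∇_x V + ∂_z U ∂_z V)` for plane waves with
squared frequencies `κ₁ = |k|²`, `κ₂ = |l|²`, `κ₃ = |k + l|²`; thus
`(κ₁ + κ₂ - κ₃) / 2 = -⟪k, l⟫` is the symbol of `∇_x · ∇_x`. -/
def leibnizSymbol (s κ₁ κ₂ κ₃ z : ℝ) : ℝ :=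
  poissonSymbol s κ₃ z *
    (z ^ (1 - 2 * s) * ((κ₁ + κ₂ - κ₃) / 2 * (poissonSymbol s κ₁ z * poissonSymbol s κ₂ z)) +
      z ^ (2 * s - 1) * (conormalSymbol s κ₁ z * conormalSymbol s κ₂ z))

/-- A primitive of `leibnizSymbol` in `z`: the Green flux of `P_z ∗ (UV)` against `U` and `V`. -/
def leibnizFlux (s κ₁ κ₂ κ₃ z : ℝ) : ℝ :=
  (poissonSymbol s κ₁ z * poissonSymbol s κ₂ z * conormalSymbol s κ₃ z -
    conormalSymbol s κ₁ z * poissonSymbol s κ₂ z * poissonSymbol s κ₃ z -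
    poissonSymbol s κ₁ z * conormalSymbol s κ₂ z * poissonSymbol s κ₃ z) / 2

theorem measurable_leibnizSymbol (s : ℝ) :
    Measurable fun p : ℝ × ℝ × ℝ × ℝ => leibnizSymbol s p.1 p.2.1 p.2.2.1 p.2.2.2 := by
  have hψ {f : ℝ × ℝ × ℝ × ℝ → ℝ} (hf : Measurable f) :
      Measurable fun p => poissonSymbol s (f p) p.2.2.2 :=
    (measurable_poissonSymbol s).comp (f := fun p => (f p, p.2.2.2)) (by fun_prop)
  have hq {f : ℝ × ℝ × ℝ × ℝ → ℝ} (hf : Measurable f) :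
      Measurable fun p => conormalSymbol s (f p) p.2.2.2 :=
    (measurable_conormalSymbol s).comp (f := fun p => (f p, p.2.2.2)) (by fun_prop)
  have := hψ (f := fun p => p.1) (by fun_prop)
  have := hψ (f := fun p => p.2.1) (by fun_prop)
  have := hψ (f := fun p => p.2.2.1) (by fun_prop)
  have := hq (f := fun p => p.1) (by fun_prop)
  have := hq (f := fun p => p.2.1) (by fun_prop)
  unfold leibnizSymbol
  fun_prop

theorem hasDerivAt_leibnizFlux (hs0 : 0 < s) (hs1 : s < 1) (h₁ : 0 ≤ κ₁) (h₂ : 0 ≤ κ₂)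
    (h₃ : 0 ≤ κ₃) (hz : 0 < z) :
    HasDerivAt (leibnizFlux s κ₁ κ₂ κ₃) (leibnizSymbol s κ₁ κ₂ κ₃ z) z := by
  have hψ {κ : ℝ} (hκ : 0 ≤ κ) := hasDerivAt_poissonSymbol hs0 hs1 hκ hz
  have hq {κ : ℝ} (hκ : 0 ≤ κ) := hasDerivAt_conormalSymbol hs0 hs1 hκ hz
  refine ((((((hψ h₁).mul (hψ h₂)).mul (hq h₃)).sub (((hq h₁).mul (hψ h₂)).mul (hψ h₃))).sub
    (((hψ h₁).mul (hq h₂)).mul (hψ h₃))).div_const 2).congr_deriv ?_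
  simp only [Pi.mul_apply, leibnizSymbol]
  ring

theorem continuous_leibnizFlux (hs0 : 0 < s) (hs1 : s < 1) (h₁ : 0 ≤ κ₁) (h₂ : 0 ≤ κ₂)
    (h₃ : 0 ≤ κ₃) : Continuous (leibnizFlux s κ₁ κ₂ κ₃) := by
  have hψ {κ : ℝ} (hκ : 0 ≤ κ) := continuous_poissonSymbol hs0 hκ
  have hq {κ : ℝ} (hκ : 0 ≤ κ) := continuous_conormalSymbol hs1 hκ
  exact (((((hψ h₁).mul (hψ h₂)).mul (hq h₃)).sub (((hq h₁).mul (hψ h₂)).mul (hψ h₃))).sub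
    (((hψ h₁).mul (hq h₂)).mul (hψ h₃))).div_const 2

theorem leibnizFlux_at_zero (hs0 : 0 < s) (hs1 : s < 1) (κ₁ κ₂ κ₃ : ℝ) :
    leibnizFlux s κ₁ κ₂ κ₃ 0 = -((betaS s)⁻¹ * ((κ₁ ^ s + κ₂ ^ s - κ₃ ^ s) / 2)) := by
  simp only [leibnizFlux, poissonSymbol_at_zero hs0, conormalSymbol_at_zero hs1]
  ring

theorem tendsto_leibnizFlux_atTop (hs0 : 0 < s) (hs1 : s < 1) (h₁ : 0 ≤ κ₁) (h₂ : 0 ≤ κ₂)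
    (h₃ : 0 ≤ κ₃) : Tendsto (leibnizFlux s κ₁ κ₂ κ₃) atTop (𝓝 0) := by
  have hψψq {κ κ' κ'' : ℝ} (h : 0 ≤ κ) (h' : 0 ≤ κ') (h'' : 0 ≤ κ'') :
      Tendsto (fun z => poissonSymbol s κ z * poissonSymbol s κ' z * conormalSymbol s κ'' z)
        atTop (𝓝 0) := by
    refine squeeze_zero (fun z => ?_) (fun z => ?_) (tendsto_conormalSymbol_atTop hs0 hs1 h'')
    · exact mul_nonneg (mul_nonneg (poissonSymbol_nonneg hs0 _ _) (poissonSymbol_nonneg hs0 _ _))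
        (conormalSymbol_nonneg hs0 hs1 h'' z)
    · exact mul_le_of_le_one_left (conormalSymbol_nonneg hs0 hs1 h'' z)
        (mul_le_one₀ (poissonSymbol_le_one hs0 h z) (poissonSymbol_nonneg hs0 _ _)
          (poissonSymbol_le_one hs0 h' z))
  have hlim := (((hψψq h₁ h₂ h₃).sub (hψψq h₂ h₃ h₁)).sub (hψψq h₁ h₃ h₂)).div_const 2
  simp only [sub_zero, zero_div] at hlim
  refine hlim.congr fun z => ?_
  rw [leibnizFlux]
  ring

theorem norm_leibnizSymbol_le (hs0 : 0 < s) (hs1 : s < 1) (h₁ : 0 ≤ κ₁) (h₂ : 0 ≤ κ₂)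
    (h₃ : 0 ≤ κ₃) (h : |κ₁ + κ₂ - κ₃| ≤ κ₁ + κ₂) (hz : 0 < z) :
    ‖leibnizSymbol s κ₁ κ₂ κ₃ z‖ ≤
      (z ^ (1 - 2 * s) * (κ₁ * poissonSymbol s κ₁ z) +
        z ^ (1 - 2 * s) * (κ₂ * poissonSymbol s κ₂ z)) / 2 +
      (betaS s)⁻¹ * κ₁ ^ s * (z ^ (2 * s - 1) * conormalSymbol s κ₂ z) := by
  have hψ₁ := poissonSymbol_nonneg hs0 κ₁ z
  have hψ₂ := poissonSymbol_nonneg hs0 κ₂ z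
  have hq₁ := conormalSymbol_nonneg hs0 hs1 h₁ z
  have hq₂ := conormalSymbol_nonneg hs0 hs1 h₂ z
  have htangential : |κ₁ + κ₂ - κ₃| / 2 * (poissonSymbol s κ₁ z * poissonSymbol s κ₂ z) ≤
      (κ₁ * poissonSymbol s κ₁ z + κ₂ * poissonSymbol s κ₂ z) / 2 := by
    calc |κ₁ + κ₂ - κ₃| / 2 * (poissonSymbol s κ₁ z * poissonSymbol s κ₂ z)
        ≤ (κ₁ + κ₂) / 2 * (poissonSymbol s κ₁ z * poissonSymbol s κ₂ z) := by gcongr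
      _ = (κ₁ * poissonSymbol s κ₁ z * poissonSymbol s κ₂ z +
            κ₂ * poissonSymbol s κ₂ z * poissonSymbol s κ₁ z) / 2 := by ring
      _ ≤ (κ₁ * poissonSymbol s κ₁ z * 1 + κ₂ * poissonSymbol s κ₂ z * 1) / 2 := by
        gcongr
        exacts [poissonSymbol_le_one hs0 h₂ z, poissonSymbol_le_one hs0 h₁ z]
      _ = _ := by simp only [mul_one]
  calc ‖leibnizSymbol s κ₁ κ₂ κ₃ z‖
      ≤ 1 * (‖z ^ (1 - 2 * s) * ((κ₁ + κ₂ - κ₃) / 2 *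
            (poissonSymbol s κ₁ z * poissonSymbol s κ₂ z))‖ +
          ‖z ^ (2 * s - 1) * (conormalSymbol s κ₁ z * conormalSymbol s κ₂ z)‖) := by
        rw [leibnizSymbol, norm_mul, Real.norm_of_nonneg (poissonSymbol_nonneg hs0 κ₃ z)]
        gcongr
        exacts [poissonSymbol_le_one hs0 h₃ z, norm_add_le _ _]
    _ = z ^ (1 - 2 * s) * (|κ₁ + κ₂ - κ₃| / 2 * (poissonSymbol s κ₁ z * poissonSymbol s κ₂ z)) +
          z ^ (2 * s - 1) * (conormalSymbol s κ₁ z * conormalSymbol s κ₂ z) := by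
        simp [abs_of_nonneg, Real.rpow_nonneg hz.le, hψ₁, hψ₂, hq₁, hq₂]
    _ ≤ z ^ (1 - 2 * s) * ((κ₁ * poissonSymbol s κ₁ z + κ₂ * poissonSymbol s κ₂ z) / 2) +
          z ^ (2 * s - 1) * ((betaS s)⁻¹ * κ₁ ^ s * conormalSymbol s κ₂ z) := by
        gcongr
        exact conormalSymbol_le hs0 hs1 h₁ z
    _ = _ := by ring

theorem integrableOn_leibnizSymbol (hs0 : 0 < s) (hs1 : s < 1) (h₁ : 0 ≤ κ₁) (h₂ : 0 ≤ κ₂)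
    (h₃ : 0 ≤ κ₃) (h : |κ₁ + κ₂ - κ₃| ≤ κ₁ + κ₂) :
    IntegrableOn (leibnizSymbol s κ₁ κ₂ κ₃) (Ioi 0) ∧
      ∫ z in Ioi (0 : ℝ), ‖leibnizSymbol s κ₁ κ₂ κ₃ z‖ ≤
        2 * ((betaS s)⁻¹ * κ₁ ^ s + (betaS s)⁻¹ * κ₂ ^ s) := by
  obtain ⟨hψ₁, hψ₁_eq⟩ := integral_rpow_mul_poissonSymbol hs0 hs1 h₁
  obtain ⟨hψ₂, hψ₂_eq⟩ := integral_rpow_mul_poissonSymbol hs0 hs1 h₂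
  obtain ⟨hq₂, hq₂_le⟩ := integral_rpow_mul_conormalSymbol_le hs0 hs1 h₂
  have hψ : IntegrableOn (fun z => (z ^ (1 - 2 * s) * (κ₁ * poissonSymbol s κ₁ z) +
      z ^ (1 - 2 * s) * (κ₂ * poissonSymbol s κ₂ z)) / 2) (Ioi 0) := (hψ₁.add hψ₂).div_const 2
  have hq := hq₂.const_mul ((betaS s)⁻¹ * κ₁ ^ s)
  have hle (z : ℝ) (hz : z ∈ Ioi 0) := norm_leibnizSymbol_le hs0 hs1 h₁ h₂ h₃ h hz
  have hmeas : Measurable (leibnizSymbol s κ₁ κ₂ κ₃) :=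
    (measurable_leibnizSymbol s).comp (f := fun z => (κ₁, κ₂, κ₃, z)) (by fun_prop)
  have hint : IntegrableOn (leibnizSymbol s κ₁ κ₂ κ₃) (Ioi 0) :=
    (hψ.add hq).mono' hmeas.aestronglyMeasurable
      ((ae_restrict_mem measurableSet_Ioi).mono hle)
  refine ⟨hint, (setIntegral_mono_on hint.norm (hψ.add hq) measurableSet_Ioi hle).trans ?_⟩
  rw [integral_add' hψ hq, integral_div, integral_add hψ₁ hψ₂, integral_const_mul, hψ₁_eq, hψ₂_eq]
  have hκ₁ := betaS_inv_mul_rpow_nonneg hs0 hs1 h₁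
  have hκ₂ := betaS_inv_mul_rpow_nonneg hs0 hs1 h₂
  linarith [mul_le_mul_of_nonneg_left hq₂_le hκ₁]

theorem integral_leibnizSymbol (hs0 : 0 < s) (hs1 : s < 1) (h₁ : 0 ≤ κ₁) (h₂ : 0 ≤ κ₂)
    (h₃ : 0 ≤ κ₃) (h : |κ₁ + κ₂ - κ₃| ≤ κ₁ + κ₂) :
    ∫ z in Ioi (0 : ℝ), leibnizSymbol s κ₁ κ₂ κ₃ z =
      (betaS s)⁻¹ * ((κ₁ ^ s + κ₂ ^ s - κ₃ ^ s) / 2) := by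
  rw [integral_Ioi_of_hasDerivAt_of_tendsto
    (continuous_leibnizFlux hs0 hs1 h₁ h₂ h₃).continuousWithinAt
    (fun z hz => hasDerivAt_leibnizFlux hs0 hs1 h₁ h₂ h₃ hz)
    (integrableOn_leibnizSymbol hs0 hs1 h₁ h₂ h₃ h).1
    (tendsto_leibnizFlux_atTop hs0 hs1 h₁ h₂ h₃), leibnizFlux_at_zero hs0 hs1, zero_sub, neg_neg]

end Leibniz

/-! ### Gaussian mixtures and their cosine transforms -/

section GaussianMixture

variable {V : Type*} [NormedAddCommGroup V] [InnerProductSpace ℝ V] [FiniteDimensional ℝ V]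
  [MeasurableSpace V] [BorelSpace V] {a p s t : ℝ}

local notation "dim" => (Module.finrank ℝ V : ℝ)

theorem integrable_exp_neg_mul_sq_norm (ht : 0 < t) :
    Integrable fun y : V => Real.exp (-t * ‖y‖ ^ 2) := by
  simpa [Complex.norm_exp, ← Complex.ofReal_pow] using
    (GaussianFourier.integrable_cexp_neg_mul_sq_norm_add (b := t) (by simpa using ht)
      0 (0 : V)).norm

theorem integrable_mul_cos_inner {K : V → ℝ} (hK : Integrable K) (k : V) :
    Integrable fun y => K y * Real.cos (inner ℝ k y) :=
  hK.mul_bdd (c := 1) (by fun_prop) (Eventually.of_forall fun _ => Real.abs_cos_le_one _)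

theorem integral_exp_neg_mul_sq_norm_mul_cos (ht : 0 < t) (k : V) :
    ∫ y : V, Real.exp (-t * ‖y‖ ^ 2) * Real.cos (inner ℝ k y) =
      (Real.pi / t) ^ (dim / 2) * Real.exp (-(‖k‖ ^ 2 / 4 / t)) := by
  have hb : 0 < (t : ℂ).re := by simpa using ht
  have hre : ∀ y : V, (Complex.exp (-(t : ℂ) * ‖y‖ ^ 2 + Complex.I * inner ℝ k y)).re =
      Real.exp (-t * ‖y‖ ^ 2) * Real.cos (inner ℝ k y) := fun y => by
    simp [Complex.exp_re, ← Complex.ofReal_pow]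
  simp_rw [← hre]
  refine (integral_re (GaussianFourier.integrable_cexp_neg_mul_sq_norm_add hb Complex.I k)).trans ?_
  rw [GaussianFourier.integral_cexp_neg_mul_sq_norm_add hb, Complex.I_sq,
    show (-1 * (‖k‖ : ℂ) ^ 2 / (4 * t)) = ((-(‖k‖ ^ 2 / 4 / t) : ℝ) : ℂ) by push_cast; ring,
    show ((Real.pi / t : ℂ) ^ (Module.finrank ℝ V / 2 : ℂ)) =
      (((Real.pi / t) ^ (dim / 2) : ℝ) : ℂ) by
        rw [Complex.ofReal_cpow (by positivity)]; push_cast; rfl,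
    ← Complex.ofReal_exp, ← Complex.ofReal_mul]
  rfl

theorem integral_exp_neg_mul_sq_norm (ht : 0 < t) :
    ∫ y : V, Real.exp (-t * ‖y‖ ^ 2) = (Real.pi / t) ^ (dim / 2) := by
  simpa using integral_exp_neg_mul_sq_norm_mul_cos ht (0 : V)

theorem rpow_mul_pi_div_rpow (d s : ℝ) (ht : 0 < t) :
    t ^ (d / 2 + s - 1) * (Real.pi / t) ^ (d / 2) = Real.pi ^ (d / 2) * t ^ (s - 1) := by
  rw [Real.div_rpow Real.pi_pos.le ht.le, add_sub_assoc, Real.rpow_add ht]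
  field_simp

-- The integrand is `≥ 0`, so Tonelli applies to `Γ(p) r ^ (-p) = ∫ t ^ (p - 1) e ^ (-r t) dt`.
theorem integral_rpow_neg_mul_of_gaussian {g : V → ℝ} (hp : 0 < p) (ha : 0 ≤ a)
    (hgm : Measurable g) (hg : ∀ y, 0 ≤ g y) (hg0 : ∀ y, ‖y‖ ^ 2 + a = 0 → g y = 0)
    (hgauss : ∀ t > 0, Integrable fun y => Real.exp (-t * ‖y‖ ^ 2) * g y)
    (hmix : IntegrableOn (fun t => t ^ (p - 1) * Real.exp (-(a * t)) *
      ∫ y, Real.exp (-t * ‖y‖ ^ 2) * g y) (Ioi 0)) :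
    Integrable (fun y => (‖y‖ ^ 2 + a) ^ (-p) * g y) ∧
      ∫ y, (‖y‖ ^ 2 + a) ^ (-p) * g y = (Real.Gamma p)⁻¹ *
        ∫ t in Ioi 0, t ^ (p - 1) * Real.exp (-(a * t)) * ∫ y, Real.exp (-t * ‖y‖ ^ 2) * g y := by
  have hΓ := Real.Gamma_pos_of_pos hp
  let F : V × ℝ → ℝ := fun q =>
    q.2 ^ (p - 1) * Real.exp (-(a * q.2)) * (Real.exp (-q.2 * ‖q.1‖ ^ 2) * g q.1)
  have hF : Integrable F (volume.prod (volume.restrict (Ioi 0))) := by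
    refine integrable_prod_of_nonneg (by simp only [F]; fun_prop) ?_ ?_ ?_
    · filter_upwards [ae_restrict_mem measurableSet_Ioi] with t (ht : 0 < t)
      exact Eventually.of_forall fun y => mul_nonneg (by positivity) (by have := hg y; positivity)
    · filter_upwards [ae_restrict_mem measurableSet_Ioi] with t ht
      exact (hgauss t ht).const_mul (t ^ (p - 1) * Real.exp (-(a * t)))
    · simpa only [F, integral_const_mul] using! hmix
  have hsection : ∀ y, ∫ t in Ioi 0, F (y, t) = Real.Gamma p * ((‖y‖ ^ 2 + a) ^ (-p) * g y) := by
    intro y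
    have hexp : ∀ t, F (y, t) = g y * (t ^ (p - 1) * Real.exp (-((‖y‖ ^ 2 + a) * t))) := fun t => by
      rw [show -((‖y‖ ^ 2 + a) * t) = -(a * t) + -t * ‖y‖ ^ 2 by ring, Real.exp_add]; ring
    simp_rw [hexp]
    rcases (by positivity : 0 ≤ ‖y‖ ^ 2 + a).eq_or_lt' with h0 | hpos
    · simp [hg0 y h0]
    · rw [integral_const_mul, Real.integral_rpow_mul_exp_neg_mul_Ioi hp hpos, one_div,
        Real.inv_rpow hpos.le, Real.rpow_neg hpos.le]
      ring
  constructor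
  · refine (hF.integral_prod_left.const_mul (Real.Gamma p)⁻¹).congr
      (Eventually.of_forall fun y => ?_)
    simp only [hsection, inv_mul_cancel_left₀ hΓ.ne']
  · rw [eq_inv_mul_iff_mul_eq₀ hΓ.ne', ← integral_const_mul]
    simp_rw [← hsection]
    rw [integral_integral_swap hF]
    simp only [F, integral_const_mul]

/-- The cosine transform `k ↦ ∫ K(y) cos⟨k, y⟩ dy`, the symbol of convolution with an even
kernel `K`. -/
def cosTransform (K : V → ℝ) (k : V) : ℝ := ∫ y, K y * Real.cos (inner ℝ k y)

theorem integrableOn_rpow_mul_exp_neg_mul_sub_div {b : ℝ} (hs : 0 < s) (ha : 0 < a) (hb : 0 ≤ b) :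
    IntegrableOn (fun t => t ^ (s - 1) * Real.exp (-(a * t) - b / t)) (Ioi 0) := by
  refine (integrableOn_rpow_mul_exp_neg_mul hs ha).mono' (by fun_prop) ?_
  filter_upwards [ae_restrict_mem measurableSet_Ioi] with t (ht : 0 < t)
  rw [Real.norm_of_nonneg (by positivity)]
  gcongr
  exact sub_le_self _ (by positivity)

-- Testing against `1 + cos⟨k, y⟩ ≥ 0` instead of `cos⟨k, y⟩` keeps all integrands nonnegative.
theorem integral_rpow_neg_mul_one_add_cos (hs : 0 < s) (ha : 0 < a) (k : V) :
    Integrable (fun y : V => (‖y‖ ^ 2 + a) ^ (-(dim / 2 + s)) * (1 + Real.cos (inner ℝ k y))) ∧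
      ∫ y : V, (‖y‖ ^ 2 + a) ^ (-(dim / 2 + s)) * (1 + Real.cos (inner ℝ k y)) =
        (Real.Gamma (dim / 2 + s))⁻¹ * (Real.pi ^ (dim / 2) * (a ^ (-s) *
          (besselIntegral s 0 + besselIntegral s (‖k‖ ^ 2 / 4 * a)))) := by
  have hsplit : ∀ (t : ℝ) (y : V), Real.exp (-t * ‖y‖ ^ 2) * (1 + Real.cos (inner ℝ k y)) =
      Real.exp (-t * ‖y‖ ^ 2) + Real.exp (-t * ‖y‖ ^ 2) * Real.cos (inner ℝ k y) := by
    intros; ring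
  have hmix : EqOn (fun t => t ^ (dim / 2 + s - 1) * Real.exp (-(a * t)) *
        ∫ y : V, Real.exp (-t * ‖y‖ ^ 2) * (1 + Real.cos (inner ℝ k y)))
      (fun t => Real.pi ^ (dim / 2) * (t ^ (s - 1) * Real.exp (-(a * t) - 0 / t) +
        t ^ (s - 1) * Real.exp (-(a * t) - ‖k‖ ^ 2 / 4 / t))) (Ioi 0) := fun t (ht : 0 < t) => by
    simp only [hsplit]
    rw [integral_add (integrable_exp_neg_mul_sq_norm ht)
      (integrable_mul_cos_inner (integrable_exp_neg_mul_sq_norm ht) k),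
      integral_exp_neg_mul_sq_norm ht, integral_exp_neg_mul_sq_norm_mul_cos ht,
      zero_div, sub_zero, sub_eq_add_neg (-(a * t)), Real.exp_add]
    linear_combination (Real.exp (-(a * t)) + Real.exp (-(a * t)) *
      Real.exp (-(‖k‖ ^ 2 / 4 / t))) * rpow_mul_pi_div_rpow dim s ht
  have h0 := integrableOn_rpow_mul_exp_neg_mul_sub_div hs ha le_rfl
  have hk := integrableOn_rpow_mul_exp_neg_mul_sub_div hs ha (by positivity : 0 ≤ ‖k‖ ^ 2 / 4)
  have := integral_rpow_neg_mul_of_gaussian (p := dim / 2 + s)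
    (g := fun y : V => 1 + Real.cos (inner ℝ k y)) (by positivity) ha.le (by fun_prop)
    (fun y => by linarith [Real.neg_one_le_cos (inner ℝ k y)])
    (fun y hy => absurd hy (by positivity))
    (fun t ht => by
      simp only [hsplit]
      exact (integrable_exp_neg_mul_sq_norm ht).add
        (integrable_mul_cos_inner (integrable_exp_neg_mul_sq_norm ht) k))
    ((integrableOn_congr_fun hmix measurableSet_Ioi).2 ((h0.add hk).const_mul _))
  rwa [setIntegral_congr_fun measurableSet_Ioi hmix, integral_const_mul, integral_add h0 hk,
    integral_rpow_mul_exp_neg_mul_sub_div _ _ ha, integral_rpow_mul_exp_neg_mul_sub_div _ _ ha,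
    ← mul_add, mul_zero, mul_comm a] at this

theorem integrable_rpow_neg_sq_norm_add (hs : 0 < s) (ha : 0 < a) :
    Integrable fun y : V => (‖y‖ ^ 2 + a) ^ (-(dim / 2 + s)) := by
  refine ((integral_rpow_neg_mul_one_add_cos hs ha (0 : V)).1.div_const 2).congr
    (Eventually.of_forall fun y => ?_)
  simp only [inner_zero_left, Real.cos_zero]
  ring

theorem cosTransform_rpow_neg_sq_norm_add (hs : 0 < s) (ha : 0 < a) (k : V) :
    cosTransform (fun y : V => (‖y‖ ^ 2 + a) ^ (-(dim / 2 + s))) k =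
      (Real.Gamma (dim / 2 + s))⁻¹ * (Real.pi ^ (dim / 2) *
        (a ^ (-s) * besselIntegral s (‖k‖ ^ 2 / 4 * a))) := by
  have hK := integrable_rpow_neg_sq_norm_add (V := V) hs ha
  have hsum : ∀ k : V, ∫ y : V, (‖y‖ ^ 2 + a) ^ (-(dim / 2 + s)) * (1 + Real.cos (inner ℝ k y)) =
      (∫ y : V, (‖y‖ ^ 2 + a) ^ (-(dim / 2 + s))) +
        cosTransform (fun y : V => (‖y‖ ^ 2 + a) ^ (-(dim / 2 + s))) k := fun k => by
    simp only [mul_one_add]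
    exact integral_add hK (integrable_mul_cos_inner hK k)
  have hmass := hsum 0
  have hcos := hsum k
  rw [(integral_rpow_neg_mul_one_add_cos hs ha _).2] at hmass hcos
  simp only [cosTransform, inner_zero_left, Real.cos_zero, mul_one, norm_zero,
    zero_pow two_ne_zero, zero_div, zero_mul] at hmass hcos ⊢
  linear_combination hmass / 2 - hcos

end GaussianMixture

/-! ### Symbols of the Poisson kernel and of the fractional Laplacian -/

section TruncatedKernel

variable {V : Type*} [NormedAddCommGroup V]

/-- The kernel `|y|^{-r}` cut off to `|y| > ε`, which is what the principal value integrates. -/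
def truncatedKernel (r ε : ℝ) : V → ℝ := {y | ε < ‖y‖}.indicator fun y => (‖y‖ ^ r)⁻¹

theorem measurable_truncatedKernel [MeasurableSpace V] [BorelSpace V] (r ε : ℝ) :
    Measurable (truncatedKernel r ε : V → ℝ) :=
  Measurable.indicator (by fun_prop) (measurableSet_lt measurable_const measurable_norm)

theorem truncatedKernel_nonneg (r ε : ℝ) (y : V) : 0 ≤ truncatedKernel r ε y :=
  indicator_nonneg (fun _ _ => by positivity) y

theorem truncatedKernel_neg (r ε : ℝ) (y : V) :
    truncatedKernel r ε (-y) = truncatedKernel r ε y := by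
  simp [truncatedKernel, indicator_apply]

theorem norm_truncatedKernel_mul_one_sub_cos_le [InnerProductSpace ℝ V] (r ε : ℝ) (k y : V) :
    ‖truncatedKernel r ε y * (1 - Real.cos (inner ℝ k y))‖ ≤
      (‖y‖ ^ r)⁻¹ * (1 - Real.cos (inner ℝ k y)) := by
  have h : 0 ≤ 1 - Real.cos (inner ℝ k y) := sub_nonneg.2 (Real.cos_le_one _)
  rw [Real.norm_of_nonneg (mul_nonneg (truncatedKernel_nonneg r ε y) h)]
  exact mul_le_mul_of_nonneg_right (indicator_le_self' (fun _ _ => by positivity) y) h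

end TruncatedKernel

section LevyKhintchine

variable {V : Type*} [NormedAddCommGroup V] [InnerProductSpace ℝ V] [FiniteDimensional ℝ V]
  [MeasurableSpace V] [BorelSpace V] {s : ℝ}

local notation "dim" => (Module.finrank ℝ V : ℝ)

theorem integral_rpow_mul_one_sub_exp_neg_div {m : ℝ} (hs0 : 0 < s) (hs1 : s < 1) (hm : 0 ≤ m) :
    IntegrableOn (fun t => t ^ (s - 1) * (1 - Real.exp (-(m / t)))) (Ioi 0) ∧
      ∫ t in Ioi 0, t ^ (s - 1) * (1 - Real.exp (-(m / t))) = Real.Gamma (1 - s) / s * m ^ s := by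
  have h := integral_rpow_mul_one_sub_exp_neg_mul hs0 hs1 hm
  have hinv : EqOn (fun t : ℝ => t ^ (-2 : ℝ) • (t⁻¹ ^ (s - 1) * (1 - Real.exp (-(m / t⁻¹)))))
      (fun t => t ^ (-s - 1) * (1 - Real.exp (-(m * t)))) (Ioi 0) := fun t (ht : 0 < t) => by
    simp only [smul_eq_mul, Real.inv_rpow ht.le, ← Real.rpow_neg ht.le, ← mul_assoc,
      ← Real.rpow_add ht, div_inv_eq_mul]
    ring_nf
  constructor
  · rw [← integrableOn_Ioi_comp_inv_iff]
    exact (integrableOn_congr_fun hinv measurableSet_Ioi).2 h.1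
  · rw [← h.2, ← integral_Ioi_comp_inv]
    exact setIntegral_congr_fun measurableSet_Ioi hinv

theorem Cns_eq (n : ℕ) (hs0 : 0 < s) (hs1 : s < 1) :
    Cns n s =
      4 ^ s * Real.Gamma (n / 2 + s) * s / (Real.pi ^ ((n : ℝ) / 2) * Real.Gamma (1 - s)) := by
  have hΓ : 0 < Real.Gamma (1 - s) := Real.Gamma_pos_of_pos (by linarith)
  have habs : |Real.Gamma (-s)| = Real.Gamma (1 - s) / s := by
    have h := Real.Gamma_add_one (s := -s) (by linarith)
    rw [neg_add_eq_sub] at h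
    rw [show Real.Gamma (-s) = -(Real.Gamma (1 - s) / s) by rw [h]; field_simp, abs_neg,
      abs_of_pos (by positivity)]
  rw [Cns, habs]
  field_simp

theorem Cns_pos (n : ℕ) (hs0 : 0 < s) (hs1 : s < 1) : 0 < Cns n s := by
  have := Real.Gamma_pos_of_pos (by linarith : 0 < 1 - s)
  have := Real.Gamma_pos_of_pos (by positivity : 0 < (n : ℝ) / 2 + s)
  rw [Cns_eq n hs0 hs1]
  positivity

theorem integral_one_sub_cos_div_rpow_norm (hs0 : 0 < s) (hs1 : s < 1) (k : V) :
    Integrable (fun y : V => (‖y‖ ^ (dim + 2 * s))⁻¹ * (1 - Real.cos (inner ℝ k y))) ∧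
      ∫ y : V, (‖y‖ ^ (dim + 2 * s))⁻¹ * (1 - Real.cos (inner ℝ k y)) =
        (Cns (Module.finrank ℝ V) s)⁻¹ * (‖k‖ ^ 2) ^ s := by
  have hsplit : ∀ (t : ℝ) (y : V), Real.exp (-t * ‖y‖ ^ 2) * (1 - Real.cos (inner ℝ k y)) =
      Real.exp (-t * ‖y‖ ^ 2) - Real.exp (-t * ‖y‖ ^ 2) * Real.cos (inner ℝ k y) := by
    intros; ring
  have hmix : EqOn (fun t => t ^ (dim / 2 + s - 1) * Real.exp (-(0 * t)) *
        ∫ y : V, Real.exp (-t * ‖y‖ ^ 2) * (1 - Real.cos (inner ℝ k y)))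
      (fun t => Real.pi ^ (dim / 2) * (t ^ (s - 1) * (1 - Real.exp (-(‖k‖ ^ 2 / 4 / t)))))
      (Ioi 0) := fun t (ht : 0 < t) => by
    simp only [hsplit]
    rw [integral_sub (integrable_exp_neg_mul_sq_norm ht)
      (integrable_mul_cos_inner (integrable_exp_neg_mul_sq_norm ht) k),
      integral_exp_neg_mul_sq_norm ht, integral_exp_neg_mul_sq_norm_mul_cos ht,
      zero_mul, neg_zero, Real.exp_zero]
    linear_combination (1 - Real.exp (-(‖k‖ ^ 2 / 4 / t))) * rpow_mul_pi_div_rpow dim s ht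
  have hpow : ∀ y : V, (‖y‖ ^ 2 + 0) ^ (-(dim / 2 + s)) = (‖y‖ ^ (dim + 2 * s))⁻¹ := fun y => by
    rw [add_zero, Real.rpow_neg (by positivity), ← Real.rpow_natCast_mul (norm_nonneg y)]
    push_cast
    ring_nf
  have hL := integral_rpow_mul_one_sub_exp_neg_div hs0 hs1 (by positivity : 0 ≤ ‖k‖ ^ 2 / 4)
  have := integral_rpow_neg_mul_of_gaussian (p := dim / 2 + s)
    (g := fun y : V => 1 - Real.cos (inner ℝ k y)) (by positivity) le_rfl (by fun_prop)
    (fun y => sub_nonneg.2 (Real.cos_le_one _))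
    (fun y hy => by simp [show y = 0 by simpa using hy])
    (fun t ht => by
      simp only [hsplit]
      exact (integrable_exp_neg_mul_sq_norm ht).sub
        (integrable_mul_cos_inner (integrable_exp_neg_mul_sq_norm ht) k))
    ((integrableOn_congr_fun hmix measurableSet_Ioi).2 (hL.1.const_mul _))
  simp only [hpow] at this
  rw [setIntegral_congr_fun measurableSet_Ioi hmix, integral_const_mul, hL.2,
    Real.div_rpow (by positivity) (by norm_num)] at this
  refine ⟨this.1, this.2.trans ?_⟩
  rw [Cns_eq _ hs0 hs1]
  field_simp

theorem integrable_truncatedKernel {r ε : ℝ} (hr : dim < r) (hε : 0 < ε) :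
    Integrable (truncatedKernel r ε : V → ℝ) := by
  have hr0 : 0 ≤ r := (Nat.cast_nonneg _).trans hr.le
  refine ((integrable_one_add_norm (E := V) (μ := volume) hr).const_mul ((1 + ε⁻¹) ^ r)).mono'
    (measurable_truncatedKernel r ε).aestronglyMeasurable (Eventually.of_forall fun y => ?_)
  rw [Real.norm_of_nonneg (truncatedKernel_nonneg r ε y)]
  refine indicator_le' (g := fun y : V => (1 + ε⁻¹) ^ r * (1 + ‖y‖) ^ (-r)) (fun y hy => ?_)
    (fun y _ => by positivity) y
  have hy : ε < ‖y‖ := hy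
  have hy0 : 0 < ‖y‖ := hε.trans hy
  rw [Real.rpow_neg (by positivity), ← div_eq_mul_inv,
    ← Real.div_rpow (by positivity) (by positivity), ← Real.inv_rpow hy0.le]
  gcongr
  rw [inv_le_comm₀ hy0 (by positivity), inv_div, div_le_iff₀ (by positivity)]
  have : 1 ≤ ‖y‖ * ε⁻¹ := by rw [← div_eq_mul_inv, one_le_div hε]; exact hy.le
  linarith

theorem cosTransform_truncatedKernel_sub {r ε : ℝ} (hr : dim < r) (hε : 0 < ε) (k : V) :
    cosTransform (truncatedKernel r ε) (0 : V) - cosTransform (truncatedKernel r ε) k =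
      ∫ y : V, truncatedKernel r ε y * (1 - Real.cos (inner ℝ k y)) := by
  have hN := integrable_truncatedKernel (V := V) hr hε
  simp only [cosTransform, mul_one_sub, inner_zero_left, Real.cos_zero, mul_one]
  exact (integral_sub hN (integrable_mul_cos_inner hN k)).symm

theorem norm_cosTransform_truncatedKernel_sub_le {ε : ℝ} (hs0 : 0 < s) (hs1 : s < 1) (hε : 0 < ε)
    (k : V) :
    ‖cosTransform (truncatedKernel (dim + 2 * s) ε) (0 : V) -
        cosTransform (truncatedKernel (dim + 2 * s) ε) k‖ ≤
      (Cns (Module.finrank ℝ V) s)⁻¹ * (‖k‖ ^ 2) ^ s := by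
  rw [cosTransform_truncatedKernel_sub (by linarith) hε,
    ← (integral_one_sub_cos_div_rpow_norm hs0 hs1 k).2]
  exact norm_integral_le_of_norm_le (integral_one_sub_cos_div_rpow_norm hs0 hs1 k).1
    (Eventually.of_forall fun y => norm_truncatedKernel_mul_one_sub_cos_le _ ε k y)

theorem tendsto_cosTransform_truncatedKernel_sub (hs0 : 0 < s) (hs1 : s < 1) (k : V) :
    Tendsto (fun ε => cosTransform (truncatedKernel (dim + 2 * s) ε) (0 : V) -
        cosTransform (truncatedKernel (dim + 2 * s) ε) k) (𝓝[>] 0)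
      (𝓝 ((Cns (Module.finrank ℝ V) s)⁻¹ * (‖k‖ ^ 2) ^ s)) := by
  have hLK := integral_one_sub_cos_div_rpow_norm hs0 hs1 k
  rw [← hLK.2]
  refine (tendsto_integral_filter_of_dominated_convergence _ ?_
    (Eventually.of_forall fun ε => Eventually.of_forall fun y =>
      norm_truncatedKernel_mul_one_sub_cos_le _ ε k y)
    hLK.1 (Eventually.of_forall fun y => ?_)).congr' (eventually_mem_nhdsWithin.mono fun ε hε =>
      (cosTransform_truncatedKernel_sub (by linarith) hε k).symm)
  · exact Eventually.of_forall fun ε =>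
      ((measurable_truncatedKernel _ ε).mul (by fun_prop)).aestronglyMeasurable
  rcases eq_or_ne y 0 with rfl | hy
  · simp
  refine tendsto_const_nhds.congr' ?_
  filter_upwards [nhdsWithin_le_nhds (Iio_mem_nhds (norm_pos_iff.2 hy))] with ε hε
  rw [truncatedKernel, indicator_of_mem (show y ∈ {y | ε < ‖y‖} from hε)]

end LevyKhintchine

section PoissonKernel

variable {n : ℕ} {s z : ℝ}

theorem integrable_Pker (hs : 0 < s) (hz : 0 < z) : Integrable (Pker n s z) := by
  have := (integrable_rpow_neg_sq_norm_add (V := En n) hs (pow_pos hz 2)).const_mul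
    (pns n s * z ^ (2 * s))
  rw [finrank_euclideanSpace_fin] at this
  refine this.congr (Eventually.of_forall fun y => ?_)
  simp only [Pker]
  ring_nf

theorem cosTransform_Pker (hs : 0 < s) (hz : 0 < z) (k : En n) :
    cosTransform (Pker n s z) k = poissonSymbol s (‖k‖ ^ 2) z := by
  have := Real.Gamma_pos_of_pos (by positivity : 0 < (n : ℝ) / 2 + s)
  have := Real.Gamma_pos_of_pos hs
  have hz2 : (z ^ 2) ^ (-s) * z ^ (2 * s) = 1 := by
    rw [← Real.rpow_natCast_mul hz.le, ← Real.rpow_add hz]; simp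
  have hcos := cosTransform_rpow_neg_sq_norm_add hs (pow_pos hz 2) k
  simp only [finrank_euclideanSpace_fin, cosTransform] at hcos
  calc cosTransform (Pker n s z) k
      = pns n s * z ^ (2 * s) * ∫ y : En n, (‖y‖ ^ 2 + z ^ 2) ^ (-((n : ℝ) / 2 + s)) *
          Real.cos (inner ℝ k y) := by
        rw [cosTransform, ← integral_const_mul]
        congr 1 with y
        rw [Pker, mul_assoc, show -((n : ℝ) + 2 * s) / 2 = -((n : ℝ) / 2 + s) by ring]
    _ = poissonSymbol s (‖k‖ ^ 2) z := by
        rw [hcos, poissonSymbol, pns, ← mul_div_right_comm]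
        field_simp
        linear_combination besselIntegral s (z ^ 2 * ‖k‖ ^ 2 / 4) * hz2

end PoissonKernel

/-! ### Superpositions of plane waves -/

section PlaneWave

variable {V : Type*} [NormedAddCommGroup V] [InnerProductSpace ℝ V]

/-- The plane wave `y ↦ e^{i⟨k, y⟩}` of frequency `k`. -/
def planeWave (k y : V) : ℂ := Complex.exp (inner ℝ k y * Complex.I)

theorem norm_planeWave (k y : V) : ‖planeWave k y‖ = 1 := Complex.norm_exp_ofReal_mul_I _

theorem planeWave_eq_cos_add_sin (k y : V) :
    planeWave k y = (Real.cos (inner ℝ k y) : ℂ) + (Real.sin (inner ℝ k y) : ℂ) * Complex.I := by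
  simp [planeWave, Complex.exp_mul_I]

theorem planeWave_add_left (k l y : V) : planeWave (k + l) y = planeWave k y * planeWave l y := by
  simp [planeWave, inner_add_left, add_mul, Complex.exp_add]

theorem planeWave_add_right (k x y : V) : planeWave k (x + y) = planeWave k x * planeWave k y := by
  simp [planeWave, inner_add_right, add_mul, Complex.exp_add]

theorem continuous_planeWave : Continuous fun p : V × V => planeWave p.1 p.2 := by
  unfold planeWave
  fun_prop

/-- The derivative `e ↦ i⟨k, e⟩` of the phase of the plane wave of frequency `k`. -/
def phaseDeriv (k : V) : V →L[ℝ] ℂ := Complex.I • Complex.ofRealCLM.comp (innerSL ℝ k)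

theorem phaseDeriv_apply (k e : V) : phaseDeriv k e = Complex.I * inner ℝ k e := rfl

theorem continuous_phaseDeriv : Continuous (phaseDeriv : V → V →L[ℝ] ℂ) := by
  unfold phaseDeriv
  fun_prop

theorem norm_phaseDeriv_le (k : V) : ‖phaseDeriv k‖ ≤ ‖k‖ := by
  refine ContinuousLinearMap.opNorm_le_bound _ (norm_nonneg _) fun e => ?_
  simpa [phaseDeriv_apply] using norm_inner_le_norm (𝕜 := ℝ) k e

theorem hasFDerivAt_planeWave (k y : V) :
    HasFDerivAt (planeWave k) (planeWave k y • phaseDeriv k) y := by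
  have h := (((Complex.ofRealCLM.comp (innerSL ℝ k)).hasFDerivAt (x := y)).mul_const
    Complex.I).cexp
  refine h.congr_fderiv ?_
  ext e
  simp [planeWave, phaseDeriv, mul_comm]

theorem norm_mul_planeWave_smul_phaseDeriv_le (a : ℂ) (k y : V) :
    ‖(a * planeWave k y) • phaseDeriv k‖ ≤ ‖k‖ * ‖a‖ := by
  rw [norm_smul, norm_mul, norm_planeWave, mul_one, mul_comm]
  gcongr
  exact norm_phaseDeriv_le k

variable [MeasurableSpace V] [BorelSpace V]

section

variable [SecondCountableTopology V] {Ω : Type*} [MeasurableSpace Ω]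

theorem measurable_planeWave {k : Ω → V} (hk : Measurable k) (y : V) :
    Measurable fun ω => planeWave (k ω) y :=
  continuous_planeWave.measurable.comp (hk.prodMk measurable_const)

theorem integrable_mul_planeWave {μ : Measure Ω} {c : Ω → ℂ} {k : Ω → V} (hc : Integrable c μ)
    (hk : Measurable k) (y : V) :
    Integrable (fun ω => c ω * planeWave (k ω) y) μ :=
  hc.mul_bdd (c := 1) (measurable_planeWave hk y).aestronglyMeasurable
    (Eventually.of_forall fun _ => (norm_planeWave _ _).le)

end

variable [FiniteDimensional ℝ V]

-- The sine part of the plane wave is odd, so it integrates to zero against an even kernel.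
theorem integral_mul_planeWave {K : V → ℝ} (hK : Integrable K) (heven : ∀ y, K (-y) = K y) (k : V) :
    ∫ y, (K y : ℂ) * planeWave k y = cosTransform K k := by
  have hsin : Integrable fun y => K y * Real.sin (inner ℝ k y) :=
    hK.mul_bdd (c := 1) (by fun_prop) (Eventually.of_forall fun _ => Real.abs_sin_le_one _)
  have hodd : ∫ y, K y * Real.sin (inner ℝ k y) = 0 := by
    have h := integral_neg_eq_self (fun y => K y * Real.sin (inner ℝ k y)) volume
    simp only [heven, inner_neg_right, Real.sin_neg, mul_neg, integral_neg] at h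
    linarith
  calc ∫ y, (K y : ℂ) * planeWave k y
      = ∫ y, ((K y * Real.cos (inner ℝ k y) : ℝ) : ℂ) +
          ((K y * Real.sin (inner ℝ k y) : ℝ) : ℂ) * Complex.I := by
        congr 1 with y
        rw [planeWave_eq_cos_add_sin]
        push_cast
        ring
    _ = cosTransform K k := by
        rw [integral_add (integrable_mul_cos_inner hK k).ofReal (hsin.ofReal.mul_const _),
          integral_mul_const, integral_complex_ofReal, integral_complex_ofReal, hodd]
        simp [cosTransform]

end PlaneWave

theorem ofReal_fderiv_apply {E : Type*} [NormedAddCommGroup E] [NormedSpace ℝ E] {f : E → ℝ}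
    {L : E →L[ℝ] ℂ} {x : E} (h : HasFDerivAt (fun y => (f y : ℂ)) L x) (e : E) :
    ((fderiv ℝ f x e : ℝ) : ℂ) = L e := by
  have hre : HasFDerivAt f (Complex.reCLM.comp L) x := Complex.reCLM.hasFDerivAt.comp x h
  rw [hre.fderiv, ← (Complex.ofRealCLM.hasFDerivAt.comp x hre).unique h]
  rfl

theorem ofReal_deriv {f : ℝ → ℝ} {f' : ℂ} {t : ℝ} (h : HasDerivAt (fun t => (f t : ℂ)) f' t) :
    ((deriv f t : ℝ) : ℂ) = f' := by
  simpa using ofReal_fderiv_apply h.hasFDerivAt 1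

theorem abs_sq_norm_add_sq_norm_sub_le {E : Type*} [NormedAddCommGroup E] [InnerProductSpace ℝ E]
    (x y : E) : |‖x‖ ^ 2 + ‖y‖ ^ 2 - ‖x + y‖ ^ 2| ≤ ‖x‖ ^ 2 + ‖y‖ ^ 2 := by
  have h := abs_le.1 (abs_real_inner_le_norm x y)
  rw [norm_add_sq_real, abs_le]
  constructor <;> nlinarith [sq_nonneg (‖x‖ - ‖y‖)]

section WaveSuperposition

variable {V : Type*} [NormedAddCommGroup V] [InnerProductSpace ℝ V] [MeasurableSpace V]
  {Ω Ω' Z : Type*} [MeasurableSpace Ω] [MeasurableSpace Ω'] [MeasurableSpace Z]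
  {μ : Measure Ω} {ν : Measure Ω'} {τ : Measure Z}
  {c c' : Ω → ℂ} {d : Ω' → ℂ} {k : Ω → V} {l : Ω' → V} {w w' : V → ℝ}

/-- The real function `w` is the superposition `∫ c(ω) e^{i⟨k(ω), ·⟩} dμ(ω)` of plane waves with
integrable amplitudes `c` and frequencies `k`. Fourier inversion is the case `k ξ = 2πξ`; an
arbitrary index space makes the notion stable under products. -/
structure IsWaveSuperposition (μ : Measure Ω) (c : Ω → ℂ) (k : Ω → V) (w : V → ℝ) : Prop where
  integrable : Integrable c μ
  measurable : Measurable k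
  eq_integral : ∀ y, (w y : ℂ) = ∫ ω, c ω * planeWave (k ω) y ∂μ

namespace IsWaveSuperposition

theorem unique (hw : IsWaveSuperposition μ c k w) (hw' : IsWaveSuperposition μ c k w') (y : V) :
    w y = w' y := by
  exact_mod_cast (hw.eq_integral y).trans (hw'.eq_integral y).symm

theorem congr_amplitude (hw : IsWaveSuperposition μ c k w) (h : ∀ ω, c ω = c' ω) :
    IsWaveSuperposition μ c' k w := by
  rwa [← funext h]

theorem congr_fun (hw : IsWaveSuperposition μ c k w) (h : ∀ y, w y = w' y) :
    IsWaveSuperposition μ c k w' := by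
  rwa [← funext h]

theorem const_mul (hw : IsWaveSuperposition μ c k w) (r : ℝ) :
    IsWaveSuperposition μ (fun ω => r * c ω) k (fun y => r * w y) where
  integrable := hw.integrable.const_mul _
  measurable := hw.measurable
  eq_integral y := by
    simp_rw [Complex.ofReal_mul, hw.eq_integral y, mul_assoc, integral_const_mul]

theorem norm_le (hw : IsWaveSuperposition μ c k w) (y : V) : ‖w y‖ ≤ ∫ ω, ‖c ω‖ ∂μ := by
  rw [← Complex.norm_real, hw.eq_integral]
  refine norm_integral_le_of_norm_le hw.integrable.norm (Eventually.of_forall fun ω => ?_)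
  simp [norm_planeWave]

theorem integrable_mul_norm_of_le (hw : IsWaveSuperposition μ c k w)
    (hck : Integrable (fun ω => ‖k ω‖ ^ 2 * ‖c ω‖) μ) {F : V → ℝ} (hF : Measurable F)
    (hle : ∀ x, ‖F x‖ ≤ 1 + ‖x‖ ^ 2) :
    Integrable (fun ω => F (k ω) * ‖c ω‖) μ := by
  refine (hw.integrable.norm.add hck).mono' ((hF.comp hw.measurable).aestronglyMeasurable.mul
    hw.integrable.aestronglyMeasurable.norm) (Eventually.of_forall fun ω => ?_)
  calc ‖F (k ω) * ‖c ω‖‖ = ‖F (k ω)‖ * ‖c ω‖ := by rw [norm_mul, norm_norm]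
    _ ≤ (1 + ‖k ω‖ ^ 2) * ‖c ω‖ := by gcongr; exact hle _
    _ = ‖c ω‖ + ‖k ω‖ ^ 2 * ‖c ω‖ := by ring

variable [BorelSpace V]

theorem integrable_norm_mul (hw : IsWaveSuperposition μ c k w)
    (hck : Integrable (fun ω => ‖k ω‖ ^ 2 * ‖c ω‖) μ) :
    Integrable (fun ω => ‖k ω‖ * ‖c ω‖) μ :=
  hw.integrable_mul_norm_of_le hck measurable_norm fun x => by
    rw [norm_norm]
    nlinarith [sq_nonneg (‖x‖ - 1)]

theorem integrable_rpow_mul {s : ℝ} (hs0 : 0 < s) (hs1 : s < 1) (hw : IsWaveSuperposition μ c k w)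
    (hck : Integrable (fun ω => ‖k ω‖ ^ 2 * ‖c ω‖) μ) :
    Integrable (fun ω => (‖k ω‖ ^ 2) ^ s * ‖c ω‖) μ := by
  refine hw.integrable_mul_norm_of_le hck (F := fun x => (‖x‖ ^ 2) ^ s) (by fun_prop) fun x => ?_
  rw [Real.norm_of_nonneg (by positivity)]
  calc (‖x‖ ^ 2) ^ s ≤ (1 + ‖x‖ ^ 2) ^ s := by gcongr; linarith
    _ ≤ (1 + ‖x‖ ^ 2) ^ (1 : ℝ) :=
      Real.rpow_le_rpow_of_exponent_le (by linarith [sq_nonneg ‖x‖]) hs1.le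
    _ = 1 + ‖x‖ ^ 2 := Real.rpow_one _

variable [SecondCountableTopology V]

theorem add (hw : IsWaveSuperposition μ c k w) (hw' : IsWaveSuperposition μ c' k w') :
    IsWaveSuperposition μ (fun ω => c ω + c' ω) k (fun y => w y + w' y) where
  integrable := hw.integrable.add hw'.integrable
  measurable := hw.measurable
  eq_integral y := by
    simp_rw [Complex.ofReal_add, hw.eq_integral y, hw'.eq_integral y, add_mul]
    exact (integral_add (integrable_mul_planeWave hw.integrable hw.measurable y)
      (integrable_mul_planeWave hw'.integrable hw.measurable y)).symm

theorem sum {ι : Type*} {t : Finset ι} {c : ι → Ω → ℂ} {w : ι → V → ℝ} (hk : Measurable k)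
    (hw : ∀ i ∈ t, IsWaveSuperposition μ (c i) k (w i)) :
    IsWaveSuperposition μ (fun ω => ∑ i ∈ t, c i ω) k (fun y => ∑ i ∈ t, w i y) where
  integrable := integrable_finsetSum t fun i hi => (hw i hi).integrable
  measurable := hk
  eq_integral y := by
    simp_rw [Finset.sum_mul]
    rw [integral_finsetSum t fun i hi => integrable_mul_planeWave (hw i hi).integrable hk y,
      Complex.ofReal_sum]
    exact Finset.sum_congr rfl fun i hi => (hw i hi).eq_integral y

theorem mul [SFinite μ] [SFinite ν] (hw : IsWaveSuperposition μ c k w)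
    (hw' : IsWaveSuperposition ν d l w') :
    IsWaveSuperposition (μ.prod ν) (fun p => c p.1 * d p.2) (fun p => k p.1 + l p.2)
      (fun y => w y * w' y) where
  integrable := hw.integrable.mul_prod hw'.integrable
  measurable := (hw.measurable.comp measurable_fst).add (hw'.measurable.comp measurable_snd)
  eq_integral y := by
    rw [Complex.ofReal_mul, hw.eq_integral y, hw'.eq_integral y, ← integral_prod_mul]
    simp_rw [planeWave_add_left, mul_mul_mul_comm]

theorem sub (hw : IsWaveSuperposition μ c k w) (hw' : IsWaveSuperposition μ c' k w') :
    IsWaveSuperposition μ (fun ω => c ω - c' ω) k (fun y => w y - w' y) :=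
  ((hw.add (hw'.const_mul (-1))).congr_amplitude fun ω => by push_cast; ring).congr_fun
    fun y => by ring

theorem comp_sub_right (hw : IsWaveSuperposition μ c k w) (y : V) :
    IsWaveSuperposition μ (fun ω => c ω * planeWave (k ω) (-y)) k (fun x => w (x - y)) where
  integrable := integrable_mul_planeWave hw.integrable hw.measurable (-y)
  measurable := hw.measurable
  eq_integral x := by
    simp_rw [hw.eq_integral, sub_eq_neg_add, planeWave_add_right, mul_assoc]

theorem continuous (hw : IsWaveSuperposition μ c k w) : Continuous w := by
  suffices h : Continuous fun y => (w y : ℂ) from Complex.continuous_re.comp h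
  simp_rw [hw.eq_integral]
  exact continuous_of_dominated
    (fun y => (integrable_mul_planeWave hw.integrable hw.measurable y).aestronglyMeasurable)
    (fun y => Eventually.of_forall fun ω => by simp [norm_planeWave]) hw.integrable.norm
    (Eventually.of_forall fun ω =>
      (continuous_planeWave.comp (Continuous.prodMk_right (k ω))).const_mul _)

theorem integral [SFinite μ] [SFinite τ] {C : Z → Ω → ℂ} {W : Z → V → ℝ} (hk : Measurable k)
    (hC : Integrable (fun p : Z × Ω => C p.1 p.2) (τ.prod μ))
    (hW : ∀ᵐ z ∂τ, IsWaveSuperposition μ (C z) k (W z)) :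
    IsWaveSuperposition μ (fun ω => ∫ z, C z ω ∂τ) k (fun y => ∫ z, W z y ∂τ) where
  integrable := hC.integral_prod_right
  measurable := hk
  eq_integral y := by
    have hCy : Integrable (fun p : Z × Ω => C p.1 p.2 * planeWave (k p.2) y) (τ.prod μ) :=
      integrable_mul_planeWave hC (hk.comp measurable_snd) y
    calc ((∫ z, W z y ∂τ : ℝ) : ℂ) = ∫ z, (W z y : ℂ) ∂τ := integral_complex_ofReal.symm
      _ = ∫ z, ∫ ω, C z ω * planeWave (k ω) y ∂μ ∂τ :=
        integral_congr_ae (hW.mono fun z hz => hz.eq_integral y)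
      _ = ∫ ω, ∫ z, C z ω * planeWave (k ω) y ∂τ ∂μ := integral_integral_swap hCy
      _ = ∫ ω, (∫ z, C z ω ∂τ) * planeWave (k ω) y ∂μ := by simp_rw [integral_mul_const]

theorem integrable_sq_norm_add_mul [SFinite μ] [SFinite ν] (hw : IsWaveSuperposition μ c k w)
    (hck : Integrable (fun ω => ‖k ω‖ ^ 2 * ‖c ω‖) μ) (hw' : IsWaveSuperposition ν d l w')
    (hdl : Integrable (fun ω => ‖l ω‖ ^ 2 * ‖d ω‖) ν) :
    Integrable (fun p : Ω × Ω' => ‖k p.1 + l p.2‖ ^ 2 * ‖c p.1 * d p.2‖) (μ.prod ν) := by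
  have hmul := hw.mul hw'
  refine (((hck.mul_prod hw'.integrable.norm).add (hw.integrable.norm.mul_prod hdl)).const_mul
    2).mono' ((hmul.measurable.norm.pow_const 2).aestronglyMeasurable.mul
      hmul.integrable.aestronglyMeasurable.norm) (Eventually.of_forall fun p => ?_)
  have hsq : ‖k p.1 + l p.2‖ ^ 2 ≤ 2 * (‖k p.1‖ ^ 2 + ‖l p.2‖ ^ 2) := by
    nlinarith [parallelogram_law_with_norm ℝ (k p.1) (l p.2), sq_nonneg ‖k p.1 - l p.2‖]
  rw [Real.norm_of_nonneg (by positivity), norm_mul]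
  calc ‖k p.1 + l p.2‖ ^ 2 * (‖c p.1‖ * ‖d p.2‖)
      ≤ 2 * (‖k p.1‖ ^ 2 + ‖l p.2‖ ^ 2) * (‖c p.1‖ * ‖d p.2‖) := by gcongr
    _ = 2 * (‖k p.1‖ ^ 2 * ‖c p.1‖ * ‖d p.2‖ + ‖c p.1‖ * (‖l p.2‖ ^ 2 * ‖d p.2‖)) := by ring

section Convolution

variable [FiniteDimensional ℝ V] {K : V → ℝ}

theorem convolution [SFinite μ] (hw : IsWaveSuperposition μ c k w) (hK : Integrable K)
    (heven : ∀ y, K (-y) = K y) :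
    IsWaveSuperposition μ (fun ω => c ω * cosTransform K (k ω)) k
      (fun x => ∫ y, K y * w (x - y)) := by
  have hC : Integrable (fun p : V × Ω => (K p.1 : ℂ) * (c p.2 * planeWave (k p.2) (-p.1)))
      (volume.prod μ) := by
    have hwave : Measurable fun p : V × Ω => planeWave (k p.2) (-p.1) :=
      continuous_planeWave.measurable.comp
        ((hw.measurable.comp measurable_snd).prodMk measurable_fst.neg)
    simp_rw [← mul_assoc]
    exact (hK.ofReal.mul_prod hw.integrable).mul_bdd (c := 1) hwave.aestronglyMeasurable
      (Eventually.of_forall fun p => (norm_planeWave _ _).le)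
  refine (IsWaveSuperposition.integral hw.measurable hC
    (Eventually.of_forall fun y => (hw.comp_sub_right y).const_mul (K y))).congr_amplitude
    fun ω => ?_
  calc ∫ y, (K y : ℂ) * (c ω * planeWave (k ω) (-y))
      = ∫ y, c ω * ((K (-y) : ℂ) * planeWave (k ω) (-y)) := by
        simp_rw [heven, mul_left_comm]
    _ = c ω * ∫ y, (K y : ℂ) * planeWave (k ω) y := by
        rw [integral_const_mul, integral_neg_eq_self fun y => (K y : ℂ) * planeWave (k ω) y]
    _ = c ω * cosTransform K (k ω) := by rw [integral_mul_planeWave hK heven]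

theorem integral_mul_sub [SFinite μ] (hw : IsWaveSuperposition μ c k w) (hK : Integrable K)
    (heven : ∀ y, K (-y) = K y) :
    IsWaveSuperposition μ (fun ω => c ω * (cosTransform K 0 - cosTransform K (k ω) : ℝ)) k
      (fun x => ∫ y, K y * (w x - w (x - y))) := by
  refine (((hw.const_mul (cosTransform K 0)).sub (hw.convolution hK heven)).congr_amplitude
    fun ω => by push_cast; ring).congr_fun fun x => ?_
  have hKw : Integrable fun y => K y * w (x - y) :=
    hK.mul_bdd (hw.continuous.comp (continuous_sub_left x)).aestronglyMeasurable
      (Eventually.of_forall fun y => hw.norm_le (x - y))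
  simp_rw [mul_sub, integral_sub (hK.mul_const _) hKw, integral_mul_const]
  simp [cosTransform]

end Convolution

theorem limUnder {ι : Type*} {f : Filter ι} [f.NeBot] [f.IsCountablyGenerated] {C : ι → Ω → ℂ}
    {W : ι → V → ℝ} {B : Ω → ℝ} (hB : Integrable B μ) (hk : Measurable k)
    (hW : ∀ᶠ i in f, IsWaveSuperposition μ (C i) k (W i)) (hle : ∀ᶠ i in f, ∀ ω, ‖C i ω‖ ≤ B ω)
    (hlim : ∀ ω, Tendsto (fun i => C i ω) f (𝓝 (c ω))) :
    IsWaveSuperposition μ c k (fun y => limUnder f fun i => W i y) := by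
  have hc : AEStronglyMeasurable c μ :=
    let ⟨i, hi, hWi⟩ := exists_seq_forall_of_frequently hW.frequently
    aestronglyMeasurable_of_tendsto_ae atTop (fun m => (hWi m).integrable.aestronglyMeasurable)
      (Eventually.of_forall fun ω => (hlim ω).comp hi)
  refine ⟨hB.mono' hc (Eventually.of_forall fun ω =>
      le_of_tendsto (hlim ω).norm (hle.mono fun i hi => hi ω)), hk, fun y => ?_⟩
  have hconv : Tendsto (fun i => (W i y : ℂ)) f (𝓝 (∫ ω, c ω * planeWave (k ω) y ∂μ)) := by
    refine (tendsto_integral_filter_of_dominated_convergence B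
      (hW.mono fun i hi => (integrable_mul_planeWave hi.integrable hk y).aestronglyMeasurable)
      (hle.mono fun i hi => Eventually.of_forall fun ω => ?_) hB
      (Eventually.of_forall fun ω => (hlim ω).mul_const _)).congr'
      (hW.mono fun i hi => (hi.eq_integral y).symm)
    simpa [norm_planeWave] using hi ω
  have hre : Tendsto (fun i => W i y) f (𝓝 (∫ ω, c ω * planeWave (k ω) y ∂μ).re) :=
    (Complex.continuous_re.tendsto _).comp hconv
  rw [hre.limUnder_eq]
  exact tendsto_nhds_unique ((Complex.continuous_ofReal.tendsto _).comp hre) hconv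

theorem integrable_smul_phaseDeriv (hw : IsWaveSuperposition μ c k w)
    (hck : Integrable (fun ω => ‖k ω‖ * ‖c ω‖) μ) (y : V) :
    Integrable (fun ω => (c ω * planeWave (k ω) y) • phaseDeriv (k ω)) μ :=
  hck.mono' ((integrable_mul_planeWave hw.integrable hw.measurable y).aestronglyMeasurable.smul
      (continuous_phaseDeriv.comp_aestronglyMeasurable hw.measurable.aestronglyMeasurable))
    (Eventually.of_forall fun _ => norm_mul_planeWave_smul_phaseDeriv_le _ _ _)

theorem hasFDerivAt (hw : IsWaveSuperposition μ c k w)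
    (hck : Integrable (fun ω => ‖k ω‖ * ‖c ω‖) μ) (y : V) :
    HasFDerivAt (fun y => (w y : ℂ)) (∫ ω, (c ω * planeWave (k ω) y) • phaseDeriv (k ω) ∂μ) y := by
  simp_rw [hw.eq_integral]
  refine hasFDerivAt_integral_of_dominated_of_fderiv_le
    (F' := fun y ω => (c ω * planeWave (k ω) y) • phaseDeriv (k ω)) univ_mem
    (Eventually.of_forall fun y =>
      (integrable_mul_planeWave hw.integrable hw.measurable y).aestronglyMeasurable)
    (integrable_mul_planeWave hw.integrable hw.measurable y)
    (hw.integrable_smul_phaseDeriv hck y).aestronglyMeasurable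
    (Eventually.of_forall fun ω y _ => norm_mul_planeWave_smul_phaseDeriv_le _ _ _) hck
    (Eventually.of_forall fun ω y _ => ?_)
  simpa only [mul_smul, smul_eq_mul] using (hasFDerivAt_planeWave (k ω) y).const_mul (c ω)

theorem fderiv_apply (hw : IsWaveSuperposition μ c k w)
    (hck : Integrable (fun ω => ‖k ω‖ * ‖c ω‖) μ) (e : V) :
    IsWaveSuperposition μ (fun ω => c ω * (Complex.I * inner ℝ (k ω) e)) k
      (fun y => fderiv ℝ w y e) where
  integrable := by
    simpa [planeWave, phaseDeriv_apply] using
      (hw.integrable_smul_phaseDeriv hck 0).apply_continuousLinearMap e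
  measurable := hw.measurable
  eq_integral y := by
    rw [ofReal_fderiv_apply (hw.hasFDerivAt hck y),
      ContinuousLinearMap.integral_apply (hw.integrable_smul_phaseDeriv hck y)]
    congr 1 with ω
    simp only [smul_apply, phaseDeriv_apply, smul_eq_mul]
    ring

theorem deriv {C C' : ℝ → Ω → ℂ} {W : V → ℝ → ℝ} {B : Ω → ℝ} {S : Set ℝ} {z : ℝ} (hS : S ∈ 𝓝 z)
    (hW : ∀ t ∈ S, IsWaveSuperposition μ (C t) k fun y => W y t)
    (hC : ∀ t ∈ S, ∀ ω, HasDerivAt (fun t => C t ω) (C' t ω) t)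
    (hC' : AEStronglyMeasurable (C' z) μ) (hB : Integrable B μ)
    (hle : ∀ t ∈ S, ∀ ω, ‖C' t ω‖ ≤ B ω) :
    IsWaveSuperposition μ (C' z) k fun y => deriv (W y) z := by
  have hz := mem_of_mem_nhds hS
  have hk := (hW z hz).measurable
  refine ⟨hB.mono' hC' (Eventually.of_forall (hle z hz)), hk, fun y => ?_⟩
  refine ofReal_deriv ((hasDerivAt_integral_of_dominated_loc_of_deriv_le (bound := B)
    (F := fun t ω => C t ω * planeWave (k ω) y) (F' := fun t ω => C' t ω * planeWave (k ω) y) hS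
    ?_ (integrable_mul_planeWave (hW z hz).integrable hk y)
    (hC'.mul (measurable_planeWave hk y).aestronglyMeasurable)
    (Eventually.of_forall fun ω t ht => by simpa [norm_planeWave] using hle t ht ω) hB
    (Eventually.of_forall fun ω t ht => (hC t ht ω).mul_const _)).2.congr_of_eventuallyEq ?_)
  · filter_upwards [hS] with t ht
    exact (integrable_mul_planeWave (hW t ht).integrable hk y).aestronglyMeasurable
  · filter_upwards [hS] with t ht using (hW t ht).eq_integral y

end IsWaveSuperposition

end WaveSuperposition

/-! ### Fourier multipliers of the extension problem -/

section Multipliers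

variable {n : ℕ} {s z : ℝ} {Ω Ω' : Type*} [MeasurableSpace Ω] [MeasurableSpace Ω']
  {μ : Measure Ω} {ν : Measure Ω'} {c : Ω → ℂ} {d : Ω' → ℂ} {k : Ω → En n} {l : Ω' → En n}
  {u v w : En n → ℝ}

theorem Pker_neg (y : En n) : Pker n s z (-y) = Pker n s z y := by
  simp only [Pker, norm_neg]

theorem Pconv_eq_integral_mul_comp_sub (f : En n → ℝ) (x : En n) :
    Pconv n s z f x = ∫ y, Pker n s z y * f (x - y) := by
  rw [Pconv, ← integral_sub_left_eq_self _ volume x]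
  simp only [sub_sub_cancel]

theorem setIntegral_sub_div_rpow_norm (r ε : ℝ) (w : En n → ℝ) (x : En n) :
    ∫ y in {y : En n | ε < ‖x - y‖}, (w x - w y) / ‖x - y‖ ^ r =
      ∫ y, truncatedKernel r ε y * (w x - w (x - y)) := by
  have hmeas : MeasurableSet {y : En n | ε < ‖x - y‖} :=
    measurableSet_lt measurable_const (by fun_prop)
  rw [← integral_indicator hmeas, ← integral_sub_left_eq_self _ volume x]
  congr 1 with y
  simp only [indicator_apply, truncatedKernel, mem_ofPred_eq, sub_sub_cancel, ite_mul, zero_mul,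
    div_eq_inv_mul]

/-- The inner product `∇U · ∇V` of the full gradients, in `x` and in `z`, of the
Caffarelli–Silvestre extensions of `u` and `v`. -/
def extensionGradInner (s : ℝ) (u v : En n → ℝ) (y : En n) (z : ℝ) : ℝ :=
  (∑ i, pd i (fun y' => CSext n s u y' z) y * pd i (fun y' => CSext n s v y' z) y) +
    deriv (CSext n s u y) z * deriv (CSext n s v y) z

namespace IsWaveSuperposition

theorem poissonConv [SFinite μ] (hs : 0 < s) (hz : 0 < z) (hw : IsWaveSuperposition μ c k w) :
    IsWaveSuperposition μ (fun ω => c ω * poissonSymbol s (‖k ω‖ ^ 2) z) k (Pconv n s z w) :=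
  ((hw.convolution (integrable_Pker hs hz) Pker_neg).congr_amplitude fun ω => by
    rw [cosTransform_Pker hs hz]).congr_fun fun x => (Pconv_eq_integral_mul_comp_sub w x).symm

theorem fracLaplacian [SFinite μ] (hs0 : 0 < s) (hs1 : s < 1) (hw : IsWaveSuperposition μ c k w)
    (hck : Integrable (fun ω => (‖k ω‖ ^ 2) ^ s * ‖c ω‖) μ) :
    IsWaveSuperposition μ (fun ω => c ω * ((‖k ω‖ ^ 2) ^ s : ℝ)) k (fracLap n s w) := by
  let K (ε : ℝ) : En n → ℝ := truncatedKernel ((n : ℝ) + 2 * s) ε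
  have hdim : (Module.finrank ℝ (En n) : ℝ) = n := by rw [finrank_euclideanSpace_fin]
  have hle : ∀ ε > 0, ∀ ξ, ‖cosTransform (K ε) 0 - cosTransform (K ε) ξ‖ ≤
      (Cns n s)⁻¹ * (‖ξ‖ ^ 2) ^ s := fun ε hε ξ => by
    have h := norm_cosTransform_truncatedKernel_sub_le hs0 hs1 hε ξ
    rwa [hdim, finrank_euclideanSpace_fin] at h
  have hlim : ∀ ξ, Tendsto (fun ε => cosTransform (K ε) 0 - cosTransform (K ε) ξ) (𝓝[>] 0)
      (𝓝 ((Cns n s)⁻¹ * (‖ξ‖ ^ 2) ^ s)) := fun ξ => by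
    have h := tendsto_cosTransform_truncatedKernel_sub hs0 hs1 ξ
    rwa [hdim, finrank_euclideanSpace_fin] at h
  have htrunc : ∀ ε > 0, IsWaveSuperposition μ
      (fun ω => c ω * (cosTransform (K ε) 0 - cosTransform (K ε) (k ω) : ℝ)) k
      (fun x => ∫ y in {y : En n | ε < ‖x - y‖}, (w x - w y) / ‖x - y‖ ^ ((n : ℝ) + 2 * s)) :=
    fun ε hε => (hw.integral_mul_sub (integrable_truncatedKernel (by simpa using hs0) hε)
      (truncatedKernel_neg _ _)).congr_fun fun x => (setIntegral_sub_div_rpow_norm _ _ _ _).symm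
  have hpv := IsWaveSuperposition.limUnder (f := 𝓝[>] (0 : ℝ))
    (hck.const_mul (Cns n s)⁻¹) hw.measurable
    (eventually_nhdsWithin_of_forall htrunc)
    (eventually_nhdsWithin_of_forall fun ε hε ω => by
      rw [norm_mul, Complex.norm_real, mul_comm, ← mul_assoc]
      exact mul_le_mul_of_nonneg_right (hle ε hε (k ω)) (norm_nonneg _))
    (fun ω => ((Complex.continuous_ofReal.tendsto _).comp (hlim (k ω))).const_mul (c ω))
  refine (hpv.const_mul (Cns n s)).congr_amplitude fun ω => ?_
  have : (Cns n s : ℂ) ≠ 0 := by exact_mod_cast (Cns_pos n hs0 hs1).ne'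
  push_cast
  field_simp

theorem integrable_norm_mul_poissonSymbol [SFinite μ] (hs : 0 < s) (hz : 0 < z)
    (hw : IsWaveSuperposition μ c k w) (hck : Integrable (fun ω => ‖k ω‖ * ‖c ω‖) μ) :
    Integrable (fun ω => ‖k ω‖ * ‖c ω * poissonSymbol s (‖k ω‖ ^ 2) z‖) μ := by
  refine hck.mono' (hw.measurable.norm.aestronglyMeasurable.mul
    (hw.poissonConv hs hz).integrable.aestronglyMeasurable.norm) (Eventually.of_forall fun ω => ?_)
  have hψ := poissonSymbol_le_one hs (sq_nonneg ‖k ω‖) z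
  rw [norm_mul, norm_norm, norm_norm, norm_mul, Complex.norm_real,
    Real.norm_of_nonneg (poissonSymbol_nonneg hs _ _)]
  gcongr
  exact mul_le_of_le_one_right (norm_nonneg _) hψ

theorem deriv_CSext [SFinite μ] (hs0 : 0 < s) (hs1 : s < 1) (hz : 0 < z)
    (hw : IsWaveSuperposition μ c k w)
    (hck : Integrable (fun ω => (‖k ω‖ ^ 2) ^ s * ‖c ω‖) μ) :
    IsWaveSuperposition μ
      (fun ω => c ω * (-(z ^ (2 * s - 1) * conormalSymbol s (‖k ω‖ ^ 2) z) : ℝ)) k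
      (fun y => _root_.deriv (CSext n s w y) z) := by
  let S : Set ℝ := {t | 0 < t ∧ t ^ (2 * s - 1) < z ^ (2 * s - 1) + 1}
  have hS : S ∈ 𝓝 z := (eventually_gt_nhds hz).and
    ((Real.continuousAt_rpow_const z (2 * s - 1) (Or.inl hz.ne')).eventually_lt_const
      (lt_add_one _))
  have hq : Measurable fun ω => conormalSymbol s (‖k ω‖ ^ 2) z :=
    (measurable_conormalSymbol s).comp ((hw.measurable.norm.pow_const 2).prodMk measurable_const)
  refine IsWaveSuperposition.deriv hS (fun t ht => hw.poissonConv hs0 ht.1)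
    (fun t ht ω =>
      (hasDerivAt_poissonSymbol hs0 hs1 (sq_nonneg ‖k ω‖) ht.1).ofReal_comp.const_mul (c ω))
    (hw.integrable.aestronglyMeasurable.mul
      (Complex.measurable_ofReal.comp (hq.const_mul _).neg).aestronglyMeasurable)
    (hck.const_mul ((z ^ (2 * s - 1) + 1) * (betaS s)⁻¹)) fun t ht ω => ?_
  have ht0 : 0 < t := ht.1
  have hq0 := conormalSymbol_nonneg hs0 hs1 (sq_nonneg ‖k ω‖) t
  have hqle := conormalSymbol_le hs0 hs1 (sq_nonneg ‖k ω‖) t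
  rw [norm_mul, Complex.norm_real, norm_neg, Real.norm_of_nonneg (by positivity)]
  calc ‖c ω‖ * (t ^ (2 * s - 1) * conormalSymbol s (‖k ω‖ ^ 2) t)
      ≤ ‖c ω‖ * ((z ^ (2 * s - 1) + 1) * ((betaS s)⁻¹ * (‖k ω‖ ^ 2) ^ s)) := by
        gcongr
        exact ht.2.le
    _ = (z ^ (2 * s - 1) + 1) * (betaS s)⁻¹ * ((‖k ω‖ ^ 2) ^ s * ‖c ω‖) := by ring

theorem sum_pd_mul_pd [SFinite μ] [SFinite ν] (hu : IsWaveSuperposition μ c k u)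
    (hck : Integrable (fun ω => ‖k ω‖ * ‖c ω‖) μ) (hv : IsWaveSuperposition ν d l v)
    (hdl : Integrable (fun ω => ‖l ω‖ * ‖d ω‖) ν) :
    IsWaveSuperposition (μ.prod ν) (fun p => c p.1 * d p.2 * (-inner ℝ (k p.1) (l p.2) : ℝ))
      (fun p => k p.1 + l p.2) (fun y => ∑ i, pd i u y * pd i v y) := by
  refine (IsWaveSuperposition.sum (hu.mul hv).measurable fun i _ =>
    (hu.fderiv_apply hck (EuclideanSpace.single i 1)).mul
      (hv.fderiv_apply hdl (EuclideanSpace.single i 1))).congr_amplitude fun p => ?_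
  rw [PiLp.inner_apply]
  push_cast
  rw [← Finset.sum_neg_distrib, Finset.mul_sum]
  refine Finset.sum_congr rfl fun i _ => ?_
  simp only [EuclideanSpace.inner_single_right, RCLike.inner_apply, conj_trivial, one_mul]
  push_cast
  linear_combination (c p.1 * d p.2 * (k p.1 i : ℂ) * (l p.2 i : ℂ)) * Complex.I_mul_I

theorem poissonConv_extensionGradInner_mul_rpow [SFinite μ] [SFinite ν] (hs0 : 0 < s) (hs1 : s < 1)
    (hz : 0 < z) (hu : IsWaveSuperposition μ c k u)
    (hck : Integrable (fun ω => ‖k ω‖ ^ 2 * ‖c ω‖) μ) (hv : IsWaveSuperposition ν d l v)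
    (hdl : Integrable (fun ω => ‖l ω‖ ^ 2 * ‖d ω‖) ν) :
    IsWaveSuperposition (μ.prod ν)
      (fun p => c p.1 * d p.2 *
        leibnizSymbol s (‖k p.1‖ ^ 2) (‖l p.2‖ ^ 2) (‖k p.1 + l p.2‖ ^ 2) z)
      (fun p => k p.1 + l p.2)
      (fun x => Pconv n s z (fun y => extensionGradInner s u v y z) x * z ^ (1 - 2 * s)) := by
  have hgrad := (hu.poissonConv hs0 hz).sum_pd_mul_pd
    (hu.integrable_norm_mul_poissonSymbol hs0 hz (hu.integrable_norm_mul hck))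
    (hv.poissonConv hs0 hz)
    (hv.integrable_norm_mul_poissonSymbol hs0 hz (hv.integrable_norm_mul hdl))
  have hderiv := (hu.deriv_CSext hs0 hs1 hz (hu.integrable_rpow_mul hs0 hs1 hck)).mul
    (hv.deriv_CSext hs0 hs1 hz (hv.integrable_rpow_mul hs0 hs1 hdl))
  refine ((((hgrad.add hderiv).poissonConv hs0 hz).const_mul
    (z ^ (1 - 2 * s))).congr_amplitude fun p => ?_).congr_fun fun x => mul_comm _ _
  have hpol : -inner ℝ (k p.1) (l p.2) =
      (‖k p.1‖ ^ 2 + ‖l p.2‖ ^ 2 - ‖k p.1 + l p.2‖ ^ 2) / 2 := by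
    rw [norm_add_sq_real]
    ring
  have hpow : ((z ^ (1 - 2 * s) : ℝ) : ℂ) * (z ^ (2 * s - 1) : ℝ) = 1 := by
    rw [← Complex.ofReal_mul, ← Real.rpow_add hz]
    simp
  rw [hpol, leibnizSymbol]
  push_cast
  linear_combination (c p.1 * d p.2 * poissonSymbol s (‖k p.1 + l p.2‖ ^ 2) z *
    (z ^ (2 * s - 1) : ℝ) * conormalSymbol s (‖k p.1‖ ^ 2) z *
    conormalSymbol s (‖l p.2‖ ^ 2) z) * hpow

theorem integrable_mul_leibnizSymbol [SFinite μ] [SFinite ν] (hs0 : 0 < s) (hs1 : s < 1)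
    (hu : IsWaveSuperposition μ c k u) (hck : Integrable (fun ω => ‖k ω‖ ^ 2 * ‖c ω‖) μ)
    (hv : IsWaveSuperposition ν d l v) (hdl : Integrable (fun ω => ‖l ω‖ ^ 2 * ‖d ω‖) ν) :
    Integrable (fun q : ℝ × Ω × Ω' => c q.2.1 * d q.2.2 * (leibnizSymbol s (‖k q.2.1‖ ^ 2)
      (‖l q.2.2‖ ^ 2) (‖k q.2.1 + l q.2.2‖ ^ 2) q.1 : ℂ))
      ((volume.restrict (Ioi 0)).prod (μ.prod ν)) := by
  have huv := hu.mul hv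
  have hmeas : Measurable fun q : ℝ × Ω × Ω' => leibnizSymbol s (‖k q.2.1‖ ^ 2) (‖l q.2.2‖ ^ 2)
      (‖k q.2.1 + l q.2.2‖ ^ 2) q.1 := by
    have hk := hu.measurable
    have hl := hv.measurable
    exact (measurable_leibnizSymbol s).comp (f := fun q : ℝ × Ω × Ω' =>
      (‖k q.2.1‖ ^ 2, ‖l q.2.2‖ ^ 2, ‖k q.2.1 + l q.2.2‖ ^ 2, q.1)) (by fun_prop)
  have hsymbol := fun p : Ω × Ω' => integrableOn_leibnizSymbol hs0 hs1 (sq_nonneg ‖k p.1‖)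
    (sq_nonneg ‖l p.2‖) (sq_nonneg ‖k p.1 + l p.2‖)
    (abs_sq_norm_add_sq_norm_sub_le (k p.1) (l p.2))
  refine integrable_prod_mul_ofReal_of_integral_norm_le huv.integrable.aestronglyMeasurable
    hmeas.aestronglyMeasurable (fun p => (hsymbol p).1) (fun p => (hsymbol p).2) ?_
  refine ((((hu.integrable_rpow_mul hs0 hs1 hck).mul_prod hv.integrable.norm).add
    (hu.integrable.norm.mul_prod (hv.integrable_rpow_mul hs0 hs1 hdl))).const_mul
      (2 * (betaS s)⁻¹)).congr (Eventually.of_forall fun p => ?_)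
  simp only [Pi.add_apply, norm_mul]
  ring

theorem integral_poissonConv_extensionGradInner [SFinite μ] [SFinite ν] (hs0 : 0 < s) (hs1 : s < 1)
    (hu : IsWaveSuperposition μ c k u) (hck : Integrable (fun ω => ‖k ω‖ ^ 2 * ‖c ω‖) μ)
    (hv : IsWaveSuperposition ν d l v) (hdl : Integrable (fun ω => ‖l ω‖ ^ 2 * ‖d ω‖) ν) :
    IsWaveSuperposition (μ.prod ν)
      (fun p => c p.1 * d p.2 * ((betaS s)⁻¹ *
        (((‖k p.1‖ ^ 2) ^ s + (‖l p.2‖ ^ 2) ^ s - (‖k p.1 + l p.2‖ ^ 2) ^ s) / 2) : ℝ))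
      (fun p => k p.1 + l p.2)
      (fun x => ∫ z in Ioi (0 : ℝ),
        Pconv n s z (fun y => extensionGradInner s u v y z) x * z ^ (1 - 2 * s)) := by
  refine (IsWaveSuperposition.integral (hu.mul hv).measurable
    (hu.integrable_mul_leibnizSymbol hs0 hs1 hck hv hdl)
    (ae_restrict_of_forall_mem measurableSet_Ioi fun z hz =>
      hu.poissonConv_extensionGradInner_mul_rpow hs0 hs1 hz hck hv hdl)).congr_amplitude
    fun p => ?_
  rw [integral_const_mul, integral_complex_ofReal,
    integral_leibnizSymbol hs0 hs1 (sq_nonneg _) (sq_nonneg _) (sq_nonneg _)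
      (abs_sq_norm_add_sq_norm_sub_le (k p.1) (l p.2))]

theorem gamma1 [SFinite μ] [SFinite ν] (hs0 : 0 < s) (hs1 : s < 1)
    (hu : IsWaveSuperposition μ c k u) (hck : Integrable (fun ω => ‖k ω‖ ^ 2 * ‖c ω‖) μ)
    (hv : IsWaveSuperposition ν d l v) (hdl : Integrable (fun ω => ‖l ω‖ ^ 2 * ‖d ω‖) ν) :
    IsWaveSuperposition (μ.prod ν)
      (fun p => c p.1 * d p.2 *
        (((‖k p.1‖ ^ 2) ^ s + (‖l p.2‖ ^ 2) ^ s - (‖k p.1 + l p.2‖ ^ 2) ^ s) / 2 : ℝ))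
      (fun p => k p.1 + l p.2) (Gamma1 n s u v) := by
  have huv := hu.mul hv
  have hΛu := hu.fracLaplacian hs0 hs1 (hu.integrable_rpow_mul hs0 hs1 hck)
  have hΛv := hv.fracLaplacian hs0 hs1 (hv.integrable_rpow_mul hs0 hs1 hdl)
  have hΛuv := huv.fracLaplacian hs0 hs1
    (huv.integrable_rpow_mul hs0 hs1 (hu.integrable_sq_norm_add_mul hck hv hdl))
  refine (((((hΛu.mul hv).add (hu.mul hΛv)).sub hΛuv).const_mul 2⁻¹).congr_amplitude
    fun p => ?_).congr_fun fun x => ?_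
  · push_cast
    ring
  · rw [Gamma1, Lam, Lam, Lam]
    ring

end IsWaveSuperposition

end Multipliers

open scoped FourierTransform in
theorem exists_isWaveSuperposition_of_hasCompactSupport {V : Type*} [NormedAddCommGroup V]
    [InnerProductSpace ℝ V] [FiniteDimensional ℝ V] [MeasurableSpace V] [BorelSpace V] {w : V → ℝ}
    (hw : ContDiff ℝ (⊤ : ℕ∞) w) (hsupp : HasCompactSupport w) :
    ∃ c : V → ℂ, IsWaveSuperposition volume c (fun ξ => (2 * Real.pi) • ξ) w ∧
      Integrable fun ξ => ‖(2 * Real.pi) • ξ‖ ^ 2 * ‖c ξ‖ := by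
  have hsupp' : HasCompactSupport fun y => (w y : ℂ) := hsupp.comp_left Complex.ofReal_zero
  let f : SchwartzMap V ℂ := hsupp'.toSchwartzMap (Complex.ofRealCLM.contDiff.comp hw)
  let g : SchwartzMap V ℂ := 𝓕 f
  refine ⟨g, ⟨g.integrable, measurable_const_smul _, fun y => ?_⟩, ?_⟩
  · have hinv : (w y : ℂ) = (𝓕⁻ g : SchwartzMap V ℂ) y := by
      rw [FourierTransform.fourierInv_fourier_eq]
      rfl
    rw [hinv, SchwartzMap.fourierInv_coe, Real.fourierInv_eq']
    congr 1 with ξ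
    simp only [planeWave, smul_eq_mul, inner_smul_left, mul_comm, conj_trivial]
  · simp_rw [norm_smul, mul_pow, mul_assoc]
    exact (g.integrable_pow_mul volume 2).const_mul _

theorem pointwise_fractional_Leibniz_general {n : ℕ} {s : ℝ} (hs0 : 0 < s) (hs1 : s < 1)
    {Ω Ω' : Type*} [MeasurableSpace Ω] [MeasurableSpace Ω'] {μ : Measure Ω} {ν : Measure Ω'}
    [SFinite μ] [SFinite ν] {c : Ω → ℂ} {d : Ω' → ℂ} {k : Ω → En n} {l : Ω' → En n}
    {u v : En n → ℝ} (hu : IsWaveSuperposition μ c k u)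
    (hck : Integrable (fun ω => ‖k ω‖ ^ 2 * ‖c ω‖) μ) (hv : IsWaveSuperposition ν d l v)
    (hdl : Integrable (fun ω => ‖l ω‖ ^ 2 * ‖d ω‖) ν) (x : En n) :
    Gamma1 n s u v x = betaS s * ∫ z in Ioi (0 : ℝ),
      Pconv n s z (fun y => extensionGradInner s u v y z) x * z ^ (1 - 2 * s) := by
  have hβ : (betaS s : ℂ) ≠ 0 := by exact_mod_cast (betaS_pos hs0 hs1).ne'
  have hint := (hu.integral_poissonConv_extensionGradInner hs0 hs1 hck hv hdl).const_mul (betaS s)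
  refine (hu.gamma1 hs0 hs1 hck hv hdl).unique (hint.congr_amplitude fun p => ?_) x
  rw [Complex.ofReal_mul, mul_left_comm, Complex.ofReal_inv, mul_inv_cancel_left₀ hβ]

/-- **Pointwise fractional Leibniz rule** (Theorem 1.2, Euclidean case):
`Γ₁(u,v)(x) = β_s ∫₀^∞ (P_z^{(s)} ∗ (∇̃U(·,z)·∇̃V(·,z)))(x) z^{1-2s} dz`. -/
theorem pointwise_fractional_Leibniz (n : ℕ) (hn : 1 ≤ n) (s : ℝ) (hs0 : 0 < s) (hs1 : s < 1)
    (u v : En n → ℝ) (hu : ContDiff ℝ (⊤ : ℕ∞) u) (huc : HasCompactSupport u)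
    (hv : ContDiff ℝ (⊤ : ℕ∞) v) (hvc : HasCompactSupport v) :
    ∀ x : En n,
      Gamma1 n s u v x =
        betaS s *
          ∫ z in Ioi (0 : ℝ),
            Pconv n s z
              (fun y =>
                (∑ i, pd i (fun y' => CSext n s u y' z) y * pd i (fun y' => CSext n s v y' z) y)
                  + deriv (CSext n s u y) z * deriv (CSext n s v y) z) x
              * z ^ (1 - 2 * s) := by
  obtain ⟨c, hu, hck⟩ := exists_isWaveSuperposition_of_hasCompactSupport hu huc
  obtain ⟨d, hv, hdl⟩ := exists_isWaveSuperposition_of_hasCompactSupport hv hvc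
  exact pointwise_fractional_Leibniz_general hs0 hs1 hu hck hv hdl
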